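/- arXiv:2108.03450 — 2 statements merged into one kernel-verified Lean document; each statement's English description precedes it below -/
import Mathlib

section
/- Let η and χ be Borel probability measures on ℝ with finite first moments. The following are equivalent: (1) η ≤_cd χ; (2) P_η(k) ≤ P_χ(k) for all k ∈ ℝ; (3) there exists a supermartingale coupling of η and χ. -/
open MeasureTheory Set Filter

noncomputable section

/-- `η ∈ 𝓜`: a finite Borel measure on ℝ with finite first moment. -/
def MemM (η : MeasureTheory.Measure ℝ) : Prop :=
  MeasureTheory.IsFiniteMeasure η ∧ MeasureTheory.Integrable (fun x : ℝ => x) η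

/-- Convex-decreasing order `≤_cd`. -/
def LeCD (η χ : MeasureTheory.Measure ℝ) : Prop :=
  ∀ f : ℝ → ℝ, ConvexOn ℝ Set.univ f → Antitone f →
    MeasureTheory.Integrable f η → MeasureTheory.Integrable f χ →
    ∫ x, f x ∂η ≤ ∫ x, f x ∂χ

/-- Positive convex-decreasing order `≤_pcd`. -/
def LePCD (η χ : MeasureTheory.Measure ℝ) : Prop :=
  ∀ f : ℝ → ℝ, (∀ x, 0 ≤ f x) → ConvexOn ℝ Set.univ f → Antitone f →
    MeasureTheory.Integrable f η → MeasureTheory.Integrable f χ →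
    ∫ x, f x ∂η ≤ ∫ x, f x ∂χ

/-- Positive convex order `≤_pc`. -/
def LePC (η χ : MeasureTheory.Measure ℝ) : Prop :=
  ∀ f : ℝ → ℝ, (∀ x, 0 ≤ f x) → ConvexOn ℝ Set.univ f →
    MeasureTheory.Integrable f η → MeasureTheory.Integrable f χ →
    ∫ x, f x ∂η ≤ ∫ x, f x ∂χ

/-- A supermartingale coupling of `η` and `χ`. -/
def IsSupermartingaleCoupling (η χ : MeasureTheory.Measure ℝ)
    (π : MeasureTheory.Measure (ℝ × ℝ)) : Prop :=
  MeasureTheory.IsProbabilityMeasure π ∧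
  π.map Prod.fst = η ∧ π.map Prod.snd = χ ∧
  MeasureTheory.Integrable (fun p : ℝ × ℝ => p.2) π ∧
  ∀ B : Set ℝ, MeasurableSet B →
    ∫ p in B ×ˢ (Set.univ : Set ℝ), (p : ℝ × ℝ).2 ∂π ≤ ∫ x in B, x ∂η

/-- The potential function `P_η(k) = ∫ (k-x)⁺ η(dx)`. -/
def Ppot (η : MeasureTheory.Measure ℝ) (k : ℝ) : ℝ := ∫ x, max (k - x) 0 ∂η

/-- The potential function `C_η(k) = ∫ (x-k)⁺ η(dx)`. -/
def Cpot (η : MeasureTheory.Measure ℝ) (k : ℝ) : ℝ := ∫ x, max (x - k) 0 ∂η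

/-- The left-continuous quantile function `G_η(u) = sup {k | η((-∞,k]) < u}`. -/
def quantile (η : MeasureTheory.Measure ℝ) (u : ℝ) : ℝ :=
  sSup {k : ℝ | (η (Set.Iic k)).toReal < u}

/-- The lift `μ_u = μ|_{(-∞,G(u))} + (u - μ((-∞,G(u)))) δ_{G(u)}`, with `μ_0 = 0`, `μ_1 = μ`. -/
def muU (μ : MeasureTheory.Measure ℝ) (u : ℝ) : MeasureTheory.Measure ℝ :=
  if u ≤ 0 then 0
  else if 1 ≤ u then μ
  else μ.restrict (Set.Iio (quantile μ u)) +
    (ENNReal.ofReal (u - (μ (Set.Iio (quantile μ u))).toReal)) •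
      MeasureTheory.Measure.dirac (quantile μ u)

/-- `S` is a shadow of `μ` in `ν`. -/
def IsShadow (μ ν S : MeasureTheory.Measure ℝ) : Prop :=
  MemM S ∧ LeCD μ S ∧ (∀ A : Set ℝ, MeasurableSet A → S A ≤ ν A) ∧
  ∀ η : MeasureTheory.Measure ℝ, MemM η → LeCD μ η →
    (∀ A : Set ℝ, MeasurableSet A → η A ≤ ν A) → LeCD S η

/-- `h` is the convex hull of `f`. -/
def IsConvexHullFn (f h : ℝ → ℝ) : Prop :=
  ConvexOn ℝ Set.univ h ∧ (∀ x, h x ≤ f x) ∧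
  ∀ g : ℝ → ℝ, ConvexOn ℝ Set.univ g → (∀ x, g x ≤ f x) → ∀ x, g x ≤ h x

/-- The class `𝒟(a,b)`. -/
def MemD (a b : ℝ) (f : ℝ → ℝ) : Prop :=
  (∀ x, 0 ≤ f x) ∧ Monotone f ∧ ConvexOn ℝ Set.univ f ∧
  Filter.Tendsto f Filter.atBot (nhds 0) ∧
  Filter.Tendsto (fun z => f z - (a * z - b)) Filter.atTop (nhds 0)

/-- The topological support of a measure. -/
def msupport (η : MeasureTheory.Measure ℝ) : Set ℝ :=
  {x : ℝ | ∀ U ∈ nhds x, η U ≠ 0}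

/-!
A convex decreasing function, flattened to the right of a level `b`, is a constant plus a mixture
of puts `x ↦ (k - x)⁺`: write it as the integral of minus its right derivative and apply the layer
cake formula to that nonnegative decreasing function. Hence the potentials `P` determine the
convex-decreasing order.

A coupling is obtained by superhedging duality. Call `(φ, ψ, h)` hedgeable if
`φ x + ψ y + h (x, y) + θ x * (y - x) ≥ 0` for some `θ ≥ 0`. If `h = 0`, the supremum over `x` of
the decreasing affine functions `y ↦ -φ x - θ x * (y - x)` is convex and decreasing and lies between
`-φ` and `ψ`, so the order gives `∫ φ dη + ∫ ψ dχ ≥ 0`. The M. Riesz extension theorem extends this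
functional to all `(φ, ψ, h)`, nonnegatively on hedgeable triples. Its part in `h` is integration
against a measure because the marginals control the tails, and testing it on
`h = φ(x)`, `ψ(y)` and `θ(x) (y - x)` yields the marginals and the supermartingale property.
-/

section Potential

lemma volume_inter_Ioi_of_isLowerSet {s : Set ℝ} (hs : IsLowerSet s) (hne : s.Nonempty)
    (hb : BddAbove s) (x : ℝ) : volume (s ∩ Ioi x) = ENNReal.ofReal (sSup s - x) := by
  apply le_antisymm
  · rw [← Real.volume_Ioc]
    exact measure_mono fun t ht => ⟨ht.2, le_csSup hb ht.1⟩
  · rw [← Real.volume_Ioo]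
    refine measure_mono fun t ht => ⟨?_, ht.1⟩
    obtain ⟨u, hu, htu⟩ := exists_lt_of_lt_csSup hne ht.2
    exact hs htu.le hu

lemma integrable_max_sub_zero {μ : Measure ℝ} [IsFiniteMeasure μ]
    (hμ : Integrable (fun x : ℝ => x) μ) (k : ℝ) : Integrable (fun x => max (k - x) 0) μ :=
  ((integrable_const k).sub hμ).pos_part

lemma lintegral_ofReal_sub_eq_ofReal_Ppot {μ : Measure ℝ} [IsFiniteMeasure μ]
    (hμ : Integrable (fun x : ℝ => x) μ) (k : ℝ) :
    ∫⁻ x, ENNReal.ofReal (k - x) ∂μ = ENNReal.ofReal (Ppot μ k) := by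
  rw [Ppot, ofReal_integral_eq_lintegral_ofReal (integrable_max_sub_zero hμ k)
    (.of_forall fun x => le_max_right _ _)]
  simp only [ENNReal.ofReal_max, ENNReal.ofReal_zero, max_eq_left, zero_le]

lemma setLIntegral_Ioc_ofReal_eq_lintegral_volume {h : ℝ → ℝ} (hh : Antitone h) (h0 : 0 ≤ h)
    (x b : ℝ) : ∫⁻ t in Ioc x b, ENNReal.ofReal (h t) =
      ∫⁻ s in Ioi 0, volume ({t | s < h t ∧ t ≤ b} ∩ Ioi x) := by
  rw [lintegral_eq_lintegral_meas_lt _ (.of_forall h0) hh.measurable.aemeasurable]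
  refine lintegral_congr fun s => ?_
  rw [Measure.restrict_apply (measurableSet_lt measurable_const hh.measurable)]
  congr 1
  ext t
  simp only [mem_inter_iff, mem_ofPred_eq, mem_Ioc, mem_Ioi]
  tauto

lemma monotone_rightDeriv_of_convexOn {f : ℝ → ℝ} (hf : ConvexOn ℝ univ f) :
    Monotone fun t => derivWithin f (Ioi t) t := by
  simpa only [interior_univ, monotoneOn_univ] using hf.monotoneOn_rightDeriv

lemma neg_rightDeriv_nonneg_of_antitone {f : ℝ → ℝ} (hf : Antitone f) :
    0 ≤ fun t => -derivWithin f (Ioi t) t :=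
  fun _ => neg_nonneg.2 (hf.antitoneOn _).derivWithin_nonpos

lemma continuous_of_convexOn_univ {f : ℝ → ℝ} (hf : ConvexOn ℝ univ f) : Continuous f :=
  continuousOn_univ.1 (hf.continuousOn isOpen_univ)

lemma ofReal_sub_eq_setLIntegral_rightDeriv {f : ℝ → ℝ} (hf : ConvexOn ℝ univ f)
    (hanti : Antitone f) {x b : ℝ} (hxb : x ≤ b) :
    ENNReal.ofReal (f x - f b) =
      ∫⁻ t in Ioc x b, ENNReal.ofReal (-derivWithin f (Ioi t) t) := by
  have hderiv (t : ℝ) : HasDerivWithinAt f (derivWithin f (Ioi t) t) (Ioi t) t :=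
    hf.hasDerivWithinAt_rightDeriv_of_mem_interior (by simp)
  have hint : IntervalIntegrable (fun t => derivWithin f (Ioi t) t) volume x b :=
    (monotone_rightDeriv_of_convexOn hf).intervalIntegrable
  have hneg : IntegrableOn (fun t => -derivWithin f (Ioi t) t) (Ioc x b) :=
    ((intervalIntegrable_iff_integrableOn_Ioc_of_le hxb).1 hint).neg
  rw [← ofReal_integral_eq_lintegral_ofReal hneg
      (.of_forall (neg_rightDeriv_nonneg_of_antitone hanti)),
    ← intervalIntegral.integral_of_le hxb, intervalIntegral.integral_neg,
    intervalIntegral.integral_eq_sub_of_hasDeriv_right_of_le hxb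
      (continuous_of_convexOn_univ hf).continuousOn (fun t _ => hderiv t) hint, neg_sub]

lemma Ppot_eq_setIntegral_Iio (μ : Measure ℝ) (k : ℝ) : Ppot μ k = ∫ x in Iio k, (k - x) ∂μ := by
  rw [Ppot, ← integral_indicator measurableSet_Iio]
  refine integral_congr_ae (.of_forall fun x => ?_)
  rcases lt_or_ge x k with hx | hx
  · rw [indicator_of_mem (mem_Iio.2 hx)]
    exact max_eq_left (sub_nonneg.2 hx.le)
  · rw [indicator_of_notMem (notMem_Iio.2 hx)]
    exact max_eq_right (sub_nonpos.2 hx)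

lemma Ppot_le_of_coupling {η χ : Measure ℝ} [IsFiniteMeasure η] {π : Measure (ℝ × ℝ)}
    (hη : Integrable (fun x : ℝ => x) η) (h : IsSupermartingaleCoupling η χ π) (k : ℝ) :
    Ppot η k ≤ Ppot χ k := by
  obtain ⟨_, hfst, hsnd, hint, hdrift⟩ := h
  have hmass : η.real (Iio k) = π.real (Iio k ×ˢ univ) := by
    rw [← hfst, map_measureReal_apply measurable_fst measurableSet_Iio, prod_univ]
  have hput : Integrable (fun p : ℝ × ℝ => k - p.2) π := (integrable_const k).sub hint
  calc Ppot η k = η.real (Iio k) * k - ∫ x in Iio k, x ∂η := by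
        rw [Ppot_eq_setIntegral_Iio, integral_sub (integrable_const k) hη.integrableOn,
          setIntegral_const, smul_eq_mul]
    _ ≤ π.real (Iio k ×ˢ univ) * k - ∫ p in Iio k ×ˢ univ, p.2 ∂π := by
        rw [hmass]
        exact sub_le_sub_left (hdrift (Iio k) measurableSet_Iio) _
    _ = ∫ p in Iio k ×ˢ univ, (k - p.2) ∂π := by
        rw [integral_sub (integrable_const k) hint.integrableOn, setIntegral_const, smul_eq_mul]
    _ ≤ ∫ p in Iio k ×ˢ univ, max (k - p.2) 0 ∂π :=
        integral_mono hput.integrableOn hput.pos_part.integrableOn fun p => le_max_left _ _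
    _ ≤ ∫ p, max (k - p.2) 0 ∂π :=
        setIntegral_le_integral hput.pos_part (.of_forall fun p => le_max_right _ _)
    _ = Ppot χ k := by
        rw [Ppot, ← hsnd, integral_map measurable_snd.aemeasurable]
        exact (by fun_prop : Continuous fun y : ℝ => max (k - y) 0).aestronglyMeasurable

variable {η χ : Measure ℝ} [IsFiniteMeasure η] [IsFiniteMeasure χ]

lemma lintegral_volume_inter_Ioi_le (hη : Integrable (fun x : ℝ => x) η)
    (hχ : Integrable (fun x : ℝ => x) χ) (hP : ∀ k, Ppot η k ≤ Ppot χ k) {s : Set ℝ}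
    (hs : IsLowerSet s) (hb : BddAbove s) :
    ∫⁻ x, volume (s ∩ Ioi x) ∂η ≤ ∫⁻ x, volume (s ∩ Ioi x) ∂χ := by
  rcases s.eq_empty_or_nonempty with rfl | hne
  · simp
  · simp only [volume_inter_Ioi_of_isLowerSet hs hne hb, lintegral_ofReal_sub_eq_ofReal_Ppot hη,
      lintegral_ofReal_sub_eq_ofReal_Ppot hχ]
    exact ENNReal.ofReal_le_ofReal (hP _)

lemma lintegral_setLIntegral_Ioc_ofReal_eq (μ : Measure ℝ) [SFinite μ] {h : ℝ → ℝ}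
    (hh : Antitone h) (h0 : 0 ≤ h) (b : ℝ) :
    ∫⁻ x, (∫⁻ t in Ioc x b, ENNReal.ofReal (h t)) ∂μ =
      ∫⁻ s in Ioi 0, (∫⁻ x, volume ({t | s < h t ∧ t ≤ b} ∩ Ioi x) ∂μ) := by
  simp only [setLIntegral_Ioc_ofReal_eq_lintegral_volume hh h0]
  apply lintegral_lintegral_swap
  have hset : MeasurableSet {q : (ℝ × ℝ) × ℝ | (q.1.2 < h q.2 ∧ q.2 ≤ b) ∧ q.1.1 < q.2} := by
    have := hh.measurable
    measurability
  exact (measurable_measure_prodMk_left (ν := volume) hset).aemeasurable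

lemma lintegral_setLIntegral_Ioc_ofReal_le (hη : Integrable (fun x : ℝ => x) η)
    (hχ : Integrable (fun x : ℝ => x) χ) (hP : ∀ k, Ppot η k ≤ Ppot χ k) {h : ℝ → ℝ}
    (hh : Antitone h) (h0 : 0 ≤ h) (b : ℝ) :
    ∫⁻ x, (∫⁻ t in Ioc x b, ENNReal.ofReal (h t)) ∂η ≤
      ∫⁻ x, (∫⁻ t in Ioc x b, ENNReal.ofReal (h t)) ∂χ := by
  rw [lintegral_setLIntegral_Ioc_ofReal_eq η hh h0, lintegral_setLIntegral_Ioc_ofReal_eq χ hh h0]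
  exact lintegral_mono fun s => lintegral_volume_inter_Ioi_le hη hχ hP
    (fun t u hut ht => ⟨ht.1.trans_le (hh hut), hut.trans ht.2⟩) ⟨b, fun t ht => ht.2⟩

lemma integrable_comp_min {μ : Measure ℝ} [IsFiniteMeasure μ] {f : ℝ → ℝ} (hf : Continuous f)
    (hanti : Antitone f) (hfμ : Integrable f μ) (b : ℝ) : Integrable (fun x => f (min x b)) μ :=
  integrable_of_le_of_le (by fun_prop : Continuous fun x => f (min x b)).aestronglyMeasurable
    (.of_forall fun x => hanti (min_le_left x b))
    (.of_forall fun _ => hanti.map_min.le) hfμ (hfμ.sup (integrable_const (f b)))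

lemma lintegral_ofReal_sub_le {f : ℝ → ℝ} (hη : Integrable (fun x : ℝ => x) η)
    (hχ : Integrable (fun x : ℝ => x) χ) (hP : ∀ k, Ppot η k ≤ Ppot χ k)
    (hf : ConvexOn ℝ univ f) (hanti : Antitone f) (b : ℝ) :
    ∫⁻ x, ENNReal.ofReal (f (min x b) - f b) ∂η ≤
      ∫⁻ x, ENNReal.ofReal (f (min x b) - f b) ∂χ := by
  have hrepr (x : ℝ) : ENNReal.ofReal (f (min x b) - f b) =
      ∫⁻ t in Ioc x b, ENNReal.ofReal (-derivWithin f (Ioi t) t) := by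
    rw [ofReal_sub_eq_setLIntegral_rightDeriv hf hanti (min_le_right x b)]
    rcases le_total x b with hxb | hbx
    · rw [min_eq_left hxb]
    · rw [min_eq_right hbx, Ioc_self, Ioc_eq_empty_of_le hbx]
  simp only [hrepr]
  exact lintegral_setLIntegral_Ioc_ofReal_le hη hχ hP (monotone_rightDeriv_of_convexOn hf).neg
    (neg_rightDeriv_nonneg_of_antitone hanti) b

lemma integral_comp_min_le {f : ℝ → ℝ} (hmass : η univ = χ univ)
    (hη : Integrable (fun x : ℝ => x) η) (hχ : Integrable (fun x : ℝ => x) χ)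
    (hP : ∀ k, Ppot η k ≤ Ppot χ k) (hf : ConvexOn ℝ univ f) (hanti : Antitone f)
    (hfη : Integrable f η) (hfχ : Integrable f χ) (b : ℝ) :
    ∫ x, f (min x b) ∂η ≤ ∫ x, f (min x b) ∂χ := by
  have hcont := continuous_of_convexOn_univ hf
  have hintη := integrable_comp_min hcont hanti hfη b
  have hintχ := integrable_comp_min hcont hanti hfχ b
  have hintη' : Integrable (fun x => f (min x b) - f b) η := hintη.sub (integrable_const _)
  have hintχ' : Integrable (fun x => f (min x b) - f b) χ := hintχ.sub (integrable_const _)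
  have hnonneg (x : ℝ) : 0 ≤ f (min x b) - f b := sub_nonneg.2 (hanti (min_le_right x b))
  have hsub : ∫ x, (f (min x b) - f b) ∂η ≤ ∫ x, (f (min x b) - f b) ∂χ := by
    rw [← ENNReal.ofReal_le_ofReal_iff (integral_nonneg hnonneg),
      ofReal_integral_eq_lintegral_ofReal hintη' (.of_forall hnonneg),
      ofReal_integral_eq_lintegral_ofReal hintχ' (.of_forall hnonneg)]
    exact lintegral_ofReal_sub_le hη hχ hP hf hanti b
  simpa only [integral_sub hintη (integrable_const _), integral_sub hintχ (integrable_const _),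
    integral_const, measureReal_def, hmass, sub_le_sub_iff_right] using hsub

lemma tendsto_integral_comp_min {μ : Measure ℝ} [IsFiniteMeasure μ] {f : ℝ → ℝ}
    (hf : Continuous f) (hanti : Antitone f) (hfμ : Integrable f μ) :
    Tendsto (fun n : ℕ => ∫ x, f (min x n) ∂μ) atTop (nhds (∫ x, f x ∂μ)) := by
  refine tendsto_integral_of_dominated_convergence (fun x => |f x| + |f 0|)
    (fun n => (integrable_comp_min hf hanti hfμ n).aestronglyMeasurable)
    (hfμ.abs.add (integrable_const _)) (fun n => .of_forall fun x => ?_) (.of_forall fun x => ?_)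
  · rcases le_total x n with hxn | hnx
    · rw [min_eq_left hxn, Real.norm_eq_abs]
      exact le_add_of_nonneg_right (abs_nonneg _)
    · rw [min_eq_right hnx, Real.norm_eq_abs, add_comm]
      refine (abs_le_max_abs_abs (hanti hnx) (hanti n.cast_nonneg)).trans ?_
      rw [max_comm]
      exact max_le_add_of_nonneg (abs_nonneg _) (abs_nonneg _)
  · refine tendsto_const_nhds.congr' ?_
    filter_upwards [eventually_ge_atTop ⌈x⌉₊] with n hn
    rw [min_eq_left (Nat.ceil_le.1 hn)]

lemma leCD_of_Ppot_le (hmass : η univ = χ univ) (hη : Integrable (fun x : ℝ => x) η)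
    (hχ : Integrable (fun x : ℝ => x) χ) (hP : ∀ k, Ppot η k ≤ Ppot χ k) : LeCD η χ :=
  fun _ hf hanti hfη hfχ =>
    le_of_tendsto_of_tendsto'
      (tendsto_integral_comp_min (continuous_of_convexOn_univ hf) hanti hfη)
      (tendsto_integral_comp_min (continuous_of_convexOn_univ hf) hanti hfχ)
      fun n => integral_comp_min_le hmass hη hχ hP hf hanti hfη hfχ n

lemma Ppot_le_of_leCD (hη : Integrable (fun x : ℝ => x) η)
    (hχ : Integrable (fun x : ℝ => x) χ) (h : LeCD η χ) (k : ℝ) : Ppot η k ≤ Ppot χ k :=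
  h _ (((convexOn_const k convex_univ).sub (concaveOn_id convex_univ)).sup
      (convexOn_const 0 convex_univ))
    (fun _ _ hxy => max_le_max_right 0 (sub_le_sub_left hxy k))
    (integrable_max_sub_zero hη k) (integrable_max_sub_zero hχ k)

end Potential

section LinearGrowth

variable {E : Type*} [NormedAddCommGroup E]

variable (E) in
/-- The space of continuous real functions on `E` growing at most linearly at infinity; these are
the test functions on which measures with finite first moment act. -/
def linearGrowth : Submodule ℝ C(E, ℝ) where
  carrier := {f | ∃ C, ∀ p, |f p| ≤ C * (1 + ‖p‖)}
  zero_mem' := ⟨0, fun p => by simp⟩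
  add_mem' := by
    rintro f g ⟨C, hC⟩ ⟨D, hD⟩
    exact ⟨C + D, fun p => (abs_add_le _ _).trans
      ((add_le_add (hC p) (hD p)).trans_eq (add_mul _ _ _).symm)⟩
  smul_mem' := by
    rintro c f ⟨C, hC⟩
    refine ⟨|c| * C, fun p => ?_⟩
    rw [ContinuousMap.smul_apply, smul_eq_mul, abs_mul, mul_assoc]
    exact mul_le_mul_of_nonneg_left (hC p) (abs_nonneg c)

variable (E) in
/-- The function `p ↦ 1 + ‖p‖`, which dominates every function of linear growth up to a factor. -/
def linearWeight : linearGrowth E :=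
  ⟨⟨fun p => 1 + ‖p‖, by fun_prop⟩, 1, fun p => by
    rw [ContinuousMap.coe_mk, one_mul, abs_of_nonneg (by positivity)]⟩

lemma linearWeight_nonneg (p : E) : 0 ≤ (linearWeight E).1 p :=
  add_nonneg zero_le_one (norm_nonneg p)

lemma mul_mem_linearGrowth {f g : C(E, ℝ)} (hf : f ∈ linearGrowth E) {K : ℝ}
    (hg : ∀ p, |g p| ≤ K) : f * g ∈ linearGrowth E := by
  obtain ⟨C, hC⟩ := hf
  refine ⟨C * K, fun p => ?_⟩
  rw [ContinuousMap.mul_apply, abs_mul, mul_right_comm]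
  exact mul_le_mul (hC p) (hg p) (abs_nonneg _) ((abs_nonneg _).trans (hC p))

lemma one_mem_linearGrowth : (1 : C(E, ℝ)) ∈ linearGrowth E :=
  ⟨1, fun p => by simp⟩

lemma mem_linearGrowth_of_abs_le {f : C(E, ℝ)} {K : ℝ} (hf : ∀ p, |f p| ≤ K) :
    f ∈ linearGrowth E := by
  simpa only [one_mul] using mul_mem_linearGrowth one_mem_linearGrowth hf

lemma mem_linearGrowth_of_hasCompactSupport {f : C(E, ℝ)} (hf : HasCompactSupport f) :
    f ∈ linearGrowth E :=
  let ⟨_, hK⟩ := f.continuous.bounded_above_of_compact_support hf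
  mem_linearGrowth_of_abs_le hK

/-- A continuous function equal to `1` on the ball of radius `n` and to `0` off the ball of radius
`n + 1`. -/
def cutoff (n : ℕ) : C(E, ℝ) := ⟨fun p => max 0 (min 1 (n + 1 - ‖p‖)), by fun_prop⟩

lemma cutoff_nonneg (n : ℕ) (p : E) : 0 ≤ cutoff n p := le_max_left _ _

lemma cutoff_le_one (n : ℕ) (p : E) : cutoff n p ≤ 1 := max_le zero_le_one (min_le_left _ _)

lemma cutoff_eq_one {n : ℕ} {p : E} (hp : ‖p‖ ≤ n) : cutoff n p = 1 := by
  have : 1 ≤ n + 1 - ‖p‖ := by linarith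
  rw [cutoff, ContinuousMap.coe_mk, min_eq_left this, max_eq_right zero_le_one]

lemma eventually_cutoff_eq_one (p : E) : ∀ᶠ n in atTop, cutoff n p = 1 := by
  filter_upwards [eventually_ge_atTop ⌈‖p‖⌉₊] with n hn
  exact cutoff_eq_one (Nat.ceil_le.1 hn)

lemma hasCompactSupport_cutoff [ProperSpace E] (n : ℕ) :
    HasCompactSupport (cutoff n : C(E, ℝ)) := by
  refine .of_support_subset_isCompact (isCompact_closedBall 0 (n + 1)) fun p hp => ?_
  by_contra hfar
  rw [mem_closedBall_zero_iff, not_le] at hfar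
  exact hp (max_eq_left ((min_le_right _ _).trans (by linarith)))

/-- The product of a function of linear growth with the cutoff at radius `n`. -/
def truncate (n : ℕ) (f : linearGrowth E) : linearGrowth E :=
  ⟨f.1 * cutoff n, mul_mem_linearGrowth f.2 fun p =>
    (abs_of_nonneg (cutoff_nonneg n p)).trans_le (cutoff_le_one n p)⟩

lemma hasCompactSupport_truncate [ProperSpace E] (n : ℕ) (f : linearGrowth E) :
    HasCompactSupport (truncate n f).1 :=
  (hasCompactSupport_cutoff n).mul_left

lemma abs_truncate_le (n : ℕ) (f : linearGrowth E) (p : E) : |(truncate n f).1 p| ≤ |f.1 p| := by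
  rw [truncate, ContinuousMap.mul_apply, abs_mul, abs_of_nonneg (cutoff_nonneg n p)]
  exact mul_le_of_le_one_right (abs_nonneg _) (cutoff_le_one n p)

lemma eventually_truncate_eq (f : linearGrowth E) (p : E) :
    ∀ᶠ n in atTop, (truncate n f).1 p = f.1 p := by
  filter_upwards [eventually_cutoff_eq_one p] with n hn
  rw [truncate, ContinuousMap.mul_apply, hn, mul_one]

lemma truncate_linearWeight_le (n : ℕ) : truncate n (linearWeight E) ≤ linearWeight E :=
  fun p => mul_le_of_le_one_right (linearWeight_nonneg p) (cutoff_le_one n p)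

lemma abs_map_sub_map_truncate_le (Λ : linearGrowth E →ₚ[ℝ] ℝ) {f : linearGrowth E} {C : ℝ}
    (hC : ∀ p, |f.1 p| ≤ C * (1 + ‖p‖)) (n : ℕ) :
    |Λ f - Λ (truncate n f)| ≤ C * (Λ (linearWeight E) - Λ (truncate n (linearWeight E))) := by
  have hbound (p : E) : |f.1 p - (truncate n f).1 p| ≤
      C * ((linearWeight E).1 p - (truncate n (linearWeight E)).1 p) := by
    have := mul_le_mul_of_nonneg_right (hC p) (sub_nonneg.2 (cutoff_le_one n p))
    calc |f.1 p - f.1 p * cutoff n p| = |f.1 p| * (1 - cutoff n p) := by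
          rw [← mul_one_sub, abs_mul, abs_of_nonneg (sub_nonneg.2 (cutoff_le_one n p))]
      _ ≤ C * (1 + ‖p‖) * (1 - cutoff n p) := this
      _ = C * ((1 + ‖p‖) - (1 + ‖p‖) * cutoff n p) := by ring
  rw [← smul_eq_mul, ← map_sub, ← map_sub, ← map_smul, abs_le']
  constructor
  · exact OrderHomClass.mono Λ fun p => (le_abs_self _).trans (hbound p)
  · rw [← map_neg]
    exact OrderHomClass.mono Λ fun p => (neg_le_abs _).trans (hbound p)

variable [MeasurableSpace E] [BorelSpace E] {μ : Measure E}

lemma integrable_of_integrable_linearWeight (hμ : Integrable (linearWeight E).1 μ)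
    (f : linearGrowth E) : Integrable f.1 μ := by
  obtain ⟨C, hC⟩ := f.2
  exact (hμ.const_mul C).mono' f.1.continuous.aestronglyMeasurable (.of_forall hC)

lemma isFiniteMeasure_of_integrable_linearWeight (hμ : Integrable (linearWeight E).1 μ) :
    IsFiniteMeasure μ :=
  (integrable_const_iff_isFiniteMeasure one_ne_zero).1
    (integrable_of_integrable_linearWeight hμ ⟨1, one_mem_linearGrowth⟩)

lemma tendsto_integral_truncate (hμ : Integrable (linearWeight E).1 μ) (f : linearGrowth E) :
    Tendsto (fun n => ∫ p, (truncate n f).1 p ∂μ) atTop (nhds (∫ p, f.1 p ∂μ)) :=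
  tendsto_integral_of_dominated_convergence (fun p => |f.1 p|)
    (fun n => (truncate n f).1.continuous.aestronglyMeasurable)
    (integrable_of_integrable_linearWeight hμ f).abs
    (fun n => .of_forall (abs_truncate_le n f))
    (.of_forall fun p => tendsto_const_nhds.congr'
      ((eventually_truncate_eq f p).mono fun _ hn => hn.symm))

/-- Integration against a measure with finite first moment. -/
def integralLinearMap (hμ : Integrable (linearWeight E).1 μ) : linearGrowth E →ₗ[ℝ] ℝ where
  toFun f := ∫ p, f.1 p ∂μ
  map_add' f g := integral_add (integrable_of_integrable_linearWeight hμ f)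
    (integrable_of_integrable_linearWeight hμ g)
  map_smul' c f := integral_const_mul c f.1

lemma tendsto_integral_sub_truncate (hμ : Integrable (linearWeight E).1 μ) (f : linearGrowth E) :
    Tendsto (fun n => ∫ p, (f - truncate n f).1 p ∂μ) atTop (nhds 0) := by
  have hsub := (tendsto_integral_truncate hμ f).const_sub (∫ p, f.1 p ∂μ)
  rw [sub_self] at hsub
  exact hsub.congr fun n => (map_sub (integralLinearMap hμ) f (truncate n f)).symm

section Riesz

variable [ProperSpace E]

lemma integrable_linearWeight_of_integral_truncate_le [IsFiniteMeasureOnCompacts μ] {I : ℝ}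
    (hI : ∀ n, ∫ p, (truncate n (linearWeight E)).1 p ∂μ ≤ I) :
    Integrable (linearWeight E).1 μ := by
  refine (aecover_closedBall (μ := μ) (x := (0 : E))
    tendsto_natCast_atTop_atTop).integrable_of_integral_bounded_of_nonneg_ae I
    (fun n => (linearWeight E).1.continuous.continuousOn.integrableOn_compact
      (isCompact_closedBall _ _))
    (.of_forall linearWeight_nonneg) (.of_forall fun n => ?_)
  calc ∫ p in Metric.closedBall 0 (n : ℝ), (linearWeight E).1 p ∂μ
      = ∫ p in Metric.closedBall 0 (n : ℝ), (truncate n (linearWeight E)).1 p ∂μ :=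
        setIntegral_congr_fun Metric.isClosed_closedBall.measurableSet fun p hp => by
          rw [truncate, ContinuousMap.mul_apply, cutoff_eq_one (mem_closedBall_zero_iff.1 hp),
            mul_one]
    _ ≤ ∫ p, (truncate n (linearWeight E)).1 p ∂μ :=
        setIntegral_le_integral
          ((truncate n (linearWeight E)).1.continuous.integrable_of_hasCompactSupport
            (hasCompactSupport_truncate n _))
          (.of_forall fun p => mul_nonneg (linearWeight_nonneg p) (cutoff_nonneg n p))
    _ ≤ I := hI n

lemma exists_measure_integral_eq_of_hasCompactSupport (Λ : linearGrowth E →ₚ[ℝ] ℝ) :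
    ∃ π : Measure E, IsFiniteMeasureOnCompacts π ∧
      ∀ f : linearGrowth E, HasCompactSupport f.1 → ∫ p, f.1 p ∂π = Λ f := by
  let restriction : CompactlySupportedContinuousMap E ℝ →ₗ[ℝ] ℝ :=
    { toFun f := Λ ⟨f, mem_linearGrowth_of_hasCompactSupport f.hasCompactSupport⟩
      map_add' f g := map_add Λ ⟨f, _⟩ ⟨g, _⟩
      map_smul' c f := map_smul Λ c ⟨f, _⟩ }
  exact ⟨RealRMK.rieszMeasure (.mk₀ restriction fun f hf => Λ.map_nonneg (x := ⟨f, _⟩) hf),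
    inferInstance, fun f hf => RealRMK.integral_rieszMeasure _ ⟨f.1, hf⟩⟩

-- The hypothesis on `Λ` says that neither mass nor first moment escapes to infinity.
lemma exists_measure_integral_eq (Λ : linearGrowth E →ₚ[ℝ] ℝ)
    (hΛ : Tendsto (fun n => Λ (truncate n (linearWeight E))) atTop
      (nhds (Λ (linearWeight E)))) :
    ∃ π : Measure E, Integrable (linearWeight E).1 π ∧
      ∀ f : linearGrowth E, ∫ p, f.1 p ∂π = Λ f := by
  obtain ⟨π, _, hπ⟩ := exists_measure_integral_eq_of_hasCompactSupport Λ
  have htrunc (f : linearGrowth E) (n : ℕ) : ∫ p, (truncate n f).1 p ∂π = Λ (truncate n f) :=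
    hπ _ (hasCompactSupport_truncate n f)
  have hweight : Integrable (linearWeight E).1 π :=
    integrable_linearWeight_of_integral_truncate_le fun n =>
      (htrunc _ n).trans_le (OrderHomClass.mono Λ (truncate_linearWeight_le n))
  refine ⟨π, hweight, fun f => tendsto_nhds_unique (tendsto_integral_truncate hweight f) ?_⟩
  obtain ⟨C, hC⟩ := f.2
  have htail : Tendsto (fun n => C * (Λ (linearWeight E) - Λ (truncate n (linearWeight E)))) atTop
      (nhds 0) := by
    simpa only [sub_self, mul_zero] using (hΛ.const_sub (Λ (linearWeight E))).const_mul C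
  simp only [htrunc]
  exact tendsto_iff_norm_sub_tendsto_zero.2 (squeeze_zero (fun _ => norm_nonneg _)
    (fun n => (norm_sub_rev _ _).trans_le (abs_map_sub_map_truncate_le Λ hC n)) htail)

end Riesz

end LinearGrowth

section Extension

lemma exists_linearMap_nonneg_on_cone {A H : Type*} [AddCommGroup A] [Module ℝ A]
    [AddCommGroup H] [Module ℝ H] (S : PointedCone ℝ (A × H)) (I : A →ₗ[ℝ] ℝ)
    (hI : ∀ a, (a, 0) ∈ S → 0 ≤ I a) (hS : ∀ h, ∃ a, (a, h) ∈ S) :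
    ∃ Λ : H →ₗ[ℝ] ℝ, ∀ a h, (a, h) ∈ S → 0 ≤ I a + Λ h := by
  let I₀ : (A × H) →ₗ.[ℝ] ℝ :=
    { domain := Submodule.prod ⊤ ⊥
      toFun := (I ∘ₗ LinearMap.fst ℝ A H).domRestrict _ }
  obtain ⟨G, hGI, hGS⟩ := riesz_extension S I₀
    (by
      rintro ⟨⟨a, h⟩, _, (rfl : h = 0)⟩ ha
      exact hI a ha)
    (by
      rintro ⟨a, h⟩
      obtain ⟨b, hb⟩ := hS h
      refine ⟨⟨(b - a, 0), trivial, rfl⟩, ?_⟩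
      simpa only [Prod.mk_add_mk, sub_add_cancel, zero_add] using hb)
  refine ⟨G ∘ₗ LinearMap.inr ℝ A H, fun a h hah => ?_⟩
  have hGa : G (a, 0) = I a := hGI ⟨(a, 0), trivial, rfl⟩
  rw [LinearMap.comp_apply, LinearMap.inr_apply, ← hGa, ← map_add, Prod.mk_add_mk, add_zero,
    zero_add]
  exact hGS _ hah

end Extension

section Duality

lemma exists_convexOn_antitone_between {φ ψ θ : ℝ → ℝ} (hθ : ∀ x, 0 ≤ θ x)
    (h : ∀ x y, 0 ≤ φ x + ψ y + θ x * (y - x)) :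
    ∃ g : ℝ → ℝ, ConvexOn ℝ univ g ∧ Antitone g ∧ (∀ x, -φ x ≤ g x) ∧ ∀ y, g y ≤ ψ y := by
  let line (x y : ℝ) : ℝ := -φ x - θ x * (y - x)
  have hline (x y : ℝ) : line x y ≤ ψ y := by
    have := h x y
    simp only [line]
    linarith
  have hbdd (y : ℝ) : BddAbove (range fun x => line x y) := ⟨ψ y, forall_mem_range.2 (hline · y)⟩
  refine ⟨fun y => ⨆ x, line x y, ⟨convex_univ, ?_⟩, ?_, ?_, fun y => ciSup_le (hline · y)⟩
  · intro y _ z _ a b ha hb hab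
    refine ciSup_le fun x => ?_
    calc line x (a • y + b • z) = a * line x y + b * line x z := by
          simp only [line, smul_eq_mul]
          linear_combination (-φ x + θ x * x) * -hab
      _ ≤ a * (⨆ x, line x y) + b * (⨆ x, line x z) :=
          add_le_add (mul_le_mul_of_nonneg_left (le_ciSup (hbdd y) x) ha)
            (mul_le_mul_of_nonneg_left (le_ciSup (hbdd z) x) hb)
  · exact fun y z hyz => ciSup_mono (hbdd y) fun x =>
      sub_le_sub_left (mul_le_mul_of_nonneg_left (sub_le_sub_right hyz x) (hθ x)) _
  · intro x
    simpa only [line, sub_self, mul_zero, sub_zero] using le_ciSup (hbdd x) x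

lemma integral_add_integral_nonneg_of_leCD {η χ : Measure ℝ} (h : LeCD η χ) {φ ψ θ : ℝ → ℝ}
    (hφη : Integrable φ η) (hφχ : Integrable φ χ) (hψη : Integrable ψ η) (hψχ : Integrable ψ χ)
    (hθ : ∀ x, 0 ≤ θ x) (hφψ : ∀ x y, 0 ≤ φ x + ψ y + θ x * (y - x)) :
    0 ≤ ∫ x, φ x ∂η + ∫ y, ψ y ∂χ := by
  obtain ⟨g, hg, hanti, hφg, hgψ⟩ := exists_convexOn_antitone_between hθ hφψ
  have hint {μ : Measure ℝ} (hφ : Integrable φ μ) (hψ : Integrable ψ μ) : Integrable g μ :=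
    integrable_of_le_of_le (continuous_of_convexOn_univ hg).aestronglyMeasurable
      (.of_forall hφg) (.of_forall hgψ) hφ.neg hψ
  have hle : -∫ x, φ x ∂η ≤ ∫ y, ψ y ∂χ :=
    calc -∫ x, φ x ∂η = ∫ x, -φ x ∂η := (integral_neg φ).symm
      _ ≤ ∫ x, g x ∂η := integral_mono hφη.neg (hint hφη hψη) hφg
      _ ≤ ∫ y, g y ∂χ := h g hg hanti (hint hφη hψη) (hint hφχ hψχ)
      _ ≤ ∫ y, ψ y ∂χ := integral_mono (hint hφχ hψχ) hψχ hgψ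
  linarith

/-- The triples `((φ, ψ), h)` such that `φ x + ψ y + h (x, y)` is nonnegative after adding a
nonnegative strategy `θ x * (y - x)`. No regularity is asked of the strategy `θ`. -/
def supermartingaleCone :
    PointedCone ℝ ((linearGrowth ℝ × linearGrowth ℝ) × linearGrowth (ℝ × ℝ)) where
  carrier := {q | ∃ θ : ℝ → ℝ, (∀ x, 0 ≤ θ x) ∧
    ∀ x y, 0 ≤ q.1.1.1 x + q.1.2.1 y + q.2.1 (x, y) + θ x * (y - x)}
  zero_mem' := ⟨0, fun _ => le_rfl, fun x y => by simp⟩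
  add_mem' := by
    rintro p q ⟨θ, hθ, hp⟩ ⟨ϑ, hϑ, hq⟩
    refine ⟨θ + ϑ, fun x => add_nonneg (hθ x) (hϑ x), fun x y => ?_⟩
    refine (add_nonneg (hp x y) (hq x y)).trans_eq ?_
    simp only [Prod.fst_add, Prod.snd_add, Submodule.coe_add, ContinuousMap.add_apply,
      Pi.add_apply]
    ring
  smul_mem' := by
    rintro ⟨c, hc⟩ q ⟨θ, hθ, hq⟩
    refine ⟨c • θ, fun x => mul_nonneg hc (hθ x), fun x y => ?_⟩
    refine (mul_nonneg hc (hq x y)).trans_eq ?_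
    change _ = c * q.1.1.1 x + c * q.1.2.1 y + c * q.2.1 (x, y) + c * θ x * (y - x)
    ring

/-- The functional `((φ, ψ), h) ↦ ∫ φ dη + ∫ ψ dχ + Λ h` is nonnegative on the cone. When `Λ` is
integration against `π`, this is the dual description of `π` being a supermartingale coupling of
`η` and `χ`. -/
def NonnegOnSupermartingaleCone (η χ : Measure ℝ) (Λ : linearGrowth (ℝ × ℝ) → ℝ) : Prop :=
  ∀ φ ψ h, ((φ, ψ), h) ∈ supermartingaleCone → 0 ≤ ∫ x, φ.1 x ∂η + ∫ y, ψ.1 y ∂χ + Λ h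

variable {φ ψ : linearGrowth ℝ} {h : linearGrowth (ℝ × ℝ)}

lemma mem_supermartingaleCone_of_nonneg (hφψh : ∀ x y, 0 ≤ φ.1 x + ψ.1 y + h.1 (x, y)) :
    ((φ, ψ), h) ∈ supermartingaleCone :=
  ⟨0, fun _ => le_rfl, fun x y => by simpa using hφψh x y⟩

lemma exists_mem_supermartingaleCone (h : linearGrowth (ℝ × ℝ)) :
    ∃ a, (a, h) ∈ supermartingaleCone := by
  obtain ⟨C, hC⟩ := h.2
  have hC0 : 0 ≤ C := by simpa using (abs_nonneg _).trans (hC 0)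
  refine ⟨(C • linearWeight ℝ, C • linearWeight ℝ), mem_supermartingaleCone_of_nonneg fun x y => ?_⟩
  have hnorm : 1 + ‖(x, y)‖ ≤ (1 + ‖x‖) + (1 + ‖y‖) := by
    have := max_le_add_of_nonneg (norm_nonneg x) (norm_nonneg y)
    rw [Prod.norm_mk]
    linarith
  calc 0 ≤ C * (1 + ‖(x, y)‖) + h.1 (x, y) := neg_le_iff_add_nonneg'.1 (abs_le.1 (hC _)).1
    _ ≤ C * ((1 + ‖x‖) + (1 + ‖y‖)) + h.1 (x, y) := by gcongr
    _ = C * (1 + ‖x‖) + C * (1 + ‖y‖) + h.1 (x, y) := by ring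

lemma linearWeight_sub_truncate_mem_supermartingaleCone (n : ℕ) :
    ((linearWeight ℝ - truncate n (linearWeight ℝ), linearWeight ℝ - truncate n (linearWeight ℝ)),
      truncate n (linearWeight (ℝ × ℝ)) - linearWeight (ℝ × ℝ)) ∈ supermartingaleCone := by
  refine mem_supermartingaleCone_of_nonneg fun x y => ?_
  let tail (r : ℝ) : ℝ := 1 + r - (1 + r) * max 0 (min 1 (n + 1 - r))
  have htail (z : ℝ) : 0 ≤ tail ‖z‖ := sub_nonneg.2 (truncate_linearWeight_le n z)
  have hmax : tail ‖(x, y)‖ ≤ tail ‖x‖ + tail ‖y‖ := by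
    rw [Prod.norm_mk]
    rcases max_choice ‖x‖ ‖y‖ with hxy | hxy <;> rw [hxy]
    · exact le_add_of_nonneg_right (htail y)
    · exact le_add_of_nonneg_left (htail x)
  change 0 ≤ tail ‖x‖ + tail ‖y‖ +
    ((1 + ‖(x, y)‖) * max 0 (min 1 (n + 1 - ‖(x, y)‖)) - (1 + ‖(x, y)‖))
  simp only [tail] at hmax ⊢
  linarith

lemma exists_functional_nonnegOnSupermartingaleCone {η χ : Measure ℝ}
    (hη : Integrable (linearWeight ℝ).1 η) (hχ : Integrable (linearWeight ℝ).1 χ)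
    (hle : LeCD η χ) :
    ∃ Λ : linearGrowth (ℝ × ℝ) →ₗ[ℝ] ℝ, NonnegOnSupermartingaleCone η χ Λ := by
  obtain ⟨Λ, hΛ⟩ := exists_linearMap_nonneg_on_cone supermartingaleCone
    ((integralLinearMap hη).coprod (integralLinearMap hχ))
    (by
      rintro ⟨φ, ψ⟩ ⟨θ, hθ, hφψ⟩
      exact integral_add_integral_nonneg_of_leCD hle
        (integrable_of_integrable_linearWeight hη φ) (integrable_of_integrable_linearWeight hχ φ)
        (integrable_of_integrable_linearWeight hη ψ) (integrable_of_integrable_linearWeight hχ ψ)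
        hθ fun x y => by simpa using hφψ x y)
    exists_mem_supermartingaleCone
  exact ⟨Λ, fun φ ψ h => hΛ (φ, ψ) h⟩

lemma tendsto_map_truncate_linearWeight {η χ : Measure ℝ} (hη : Integrable (linearWeight ℝ).1 η)
    (hχ : Integrable (linearWeight ℝ).1 χ) (Λ : linearGrowth (ℝ × ℝ) →ₚ[ℝ] ℝ)
    (hΛ : NonnegOnSupermartingaleCone η χ Λ) :
    Tendsto (fun n => Λ (truncate n (linearWeight (ℝ × ℝ)))) atTop
      (nhds (Λ (linearWeight (ℝ × ℝ)))) := by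
  let tail (n : ℕ) : linearGrowth ℝ := linearWeight ℝ - truncate n (linearWeight ℝ)
  have htail : Tendsto (fun n => ∫ x, (tail n).1 x ∂η + ∫ y, (tail n).1 y ∂χ) atTop (nhds 0) := by
    simpa only [add_zero] using
      (tendsto_integral_sub_truncate hη _).add (tendsto_integral_sub_truncate hχ _)
  have hlower := htail.const_sub (Λ (linearWeight (ℝ × ℝ)))
  rw [sub_zero] at hlower
  refine tendsto_of_tendsto_of_tendsto_of_le_of_le hlower tendsto_const_nhds (fun n => ?_)
    fun n => OrderHomClass.mono Λ (truncate_linearWeight_le n)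
  have := hΛ _ _ _ (linearWeight_sub_truncate_mem_supermartingaleCone n)
  rw [map_sub] at this
  exact sub_le_iff_le_add'.2 (by linarith)

lemma exists_measure_nonnegOnSupermartingaleCone {η χ : Measure ℝ}
    (hη : Integrable (linearWeight ℝ).1 η) (hχ : Integrable (linearWeight ℝ).1 χ)
    (hle : LeCD η χ) :
    ∃ π : Measure (ℝ × ℝ), Integrable (linearWeight (ℝ × ℝ)).1 π ∧
      NonnegOnSupermartingaleCone η χ fun h => ∫ p, h.1 p ∂π := by
  obtain ⟨Λ₀, hΛ₀⟩ := exists_functional_nonnegOnSupermartingaleCone hη hχ hle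
  let Λ : linearGrowth (ℝ × ℝ) →ₚ[ℝ] ℝ := .mk₀ Λ₀ fun h hh => by
    simpa using hΛ₀ 0 0 h (mem_supermartingaleCone_of_nonneg fun x y => by simpa using hh (x, y))
  obtain ⟨π, hπ, hπΛ⟩ := exists_measure_integral_eq Λ
    (tendsto_map_truncate_linearWeight hη hχ Λ hΛ₀)
  refine ⟨π, hπ, ?_⟩
  simp only [hπΛ]
  exact hΛ₀

end Duality

section Localization

variable {X : Type*} [TopologicalSpace X] [MeasurableSpace X] [BorelSpace X]

lemma eq_of_forall_integral_le [HasOuterApproxClosed X] {μ ν : Measure X} [IsFiniteMeasure μ]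
    [IsFiniteMeasure ν] (h : ∀ f : BoundedContinuousFunction X ℝ, ∫ x, f x ∂μ ≤ ∫ x, f x ∂ν) :
    μ = ν := by
  refine ext_of_forall_integral_eq_of_IsFiniteMeasure fun f => le_antisymm (h f) ?_
  simpa only [BoundedContinuousFunction.coe_neg, Pi.neg_apply, integral_neg, neg_le_neg_iff]
    using h (-f)

variable {α : Type*} [MeasurableSpace α] {μ : Measure α} {T : α → X} {g : α → ℝ}

lemma tendsto_integral_apprSeq_mul [HasOuterApproxClosed X] (hT : Measurable T)
    (hg : Integrable g μ) {F : Set X} (hF : IsClosed F) :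
    Tendsto (fun n => ∫ a, (hF.apprSeq n (T a) : ℝ) * g a ∂μ) atTop
      (nhds (∫ a in T ⁻¹' F, g a ∂μ)) := by
  rw [← integral_indicator (hT hF.measurableSet)]
  refine tendsto_integral_of_dominated_convergence (fun a => ‖g a‖)
    (fun n => ?_) hg.norm (fun n => .of_forall fun a => ?_) (.of_forall fun a => ?_)
  · exact (((hF.apprSeq n).continuous.measurable.comp hT).coe_nnreal_real.aestronglyMeasurable).mul
      hg.aestronglyMeasurable
  · rw [norm_mul, NNReal.norm_eq]
    exact mul_le_of_le_one_left (norm_nonneg _)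
      (HasOuterApproxClosed.apprSeq_apply_le_one hF n (T a))
  · have happr := tendsto_pi_nhds.1 (HasOuterApproxClosed.tendsto_apprSeq hF) (T a)
    convert (NNReal.tendsto_coe.2 happr).mul_const (g a) using 2
    by_cases ha : T a ∈ F <;> simp [indicator, ha]

lemma exists_isClosed_norm_setIntegral_preimage_sdiff_le [TopologicalSpace.PseudoMetrizableSpace X]
    (hT : Measurable T) (hg : Integrable g μ) {B : Set X} (hB : MeasurableSet B) {ε : ℝ}
    (hε : 0 < ε) : ∃ F ⊆ B, IsClosed F ∧ ‖∫ a in T ⁻¹' (B \ F), g a ∂μ‖ ≤ ε := by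
  have := isFiniteMeasure_withDensity hg.hasFiniteIntegral.ne
  obtain ⟨F, hFB, hF, hlt⟩ := hB.exists_isClosed_sdiff_lt
    (μ := (μ.withDensity fun a => ‖g a‖ₑ).map T) (measure_ne_top _ _)
    (ENNReal.ofReal_pos.2 hε).ne'
  have hdiff : MeasurableSet (B \ F) := hB.diff hF.measurableSet
  rw [Measure.map_apply hT hdiff, withDensity_apply _ (hT hdiff)] at hlt
  refine ⟨F, hFB, hF, (norm_integral_le_integral_norm _).trans ?_⟩
  rw [integral_norm_eq_lintegral_enorm hg.aestronglyMeasurable.restrict]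
  exact ENNReal.toReal_le_of_le_ofReal hε.le hlt.le

lemma setIntegral_preimage_nonpos [TopologicalSpace.PseudoMetrizableSpace X]
    [HasOuterApproxClosed X] (hT : Measurable T) (hg : Integrable g μ)
    (h : ∀ θ : BoundedContinuousFunction X NNReal, ∫ a, (θ (T a) : ℝ) * g a ∂μ ≤ 0)
    {B : Set X} (hB : MeasurableSet B) : ∫ a in T ⁻¹' B, g a ∂μ ≤ 0 := by
  refine le_of_forall_pos_le_add fun ε hε => ?_
  obtain ⟨F, hFB, hF, hsmall⟩ :=
    exists_isClosed_norm_setIntegral_preimage_sdiff_le hT hg hB hε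
  have hclosed : ∫ a in T ⁻¹' F, g a ∂μ ≤ 0 :=
    le_of_tendsto (tendsto_integral_apprSeq_mul hT hg hF) (.of_forall fun n => h _)
  calc ∫ a in T ⁻¹' B, g a ∂μ
      = ∫ a in T ⁻¹' F, g a ∂μ + ∫ a in T ⁻¹' (B \ F), g a ∂μ := by
        rw [← setIntegral_union (disjoint_sdiff_right.preimage _)
          (hT (hB.diff hF.measurableSet)) hg.integrableOn hg.integrableOn, ← preimage_union,
          union_sdiff_cancel hFB]
    _ ≤ 0 + ε := add_le_add hclosed ((Real.le_norm_self _).trans hsmall)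

end Localization

section Coupling

lemma fst_mem_linearGrowth : (ContinuousMap.fst : C(ℝ × ℝ, ℝ)) ∈ linearGrowth (ℝ × ℝ) :=
  ⟨1, fun p => (norm_fst_le p).trans (by linarith)⟩

lemma snd_mem_linearGrowth : (ContinuousMap.snd : C(ℝ × ℝ, ℝ)) ∈ linearGrowth (ℝ × ℝ) :=
  ⟨1, fun p => (norm_snd_le p).trans (by linarith)⟩

variable {η χ : Measure ℝ} {π : Measure (ℝ × ℝ)}

lemma map_fst_eq_of_nonnegOnSupermartingaleCone [IsFiniteMeasure η] [IsFiniteMeasure π]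
    (hπ : NonnegOnSupermartingaleCone η χ fun h => ∫ p, h.1 p ∂π) : π.map Prod.fst = η := by
  refine eq_of_forall_integral_le fun f => ?_
  rw [integral_map measurable_fst.aemeasurable f.continuous.aestronglyMeasurable]
  let φ : linearGrowth ℝ := ⟨f, mem_linearGrowth_of_abs_le f.norm_coe_le_norm⟩
  let h : linearGrowth (ℝ × ℝ) := ⟨⟨fun p => f p.1, by fun_prop⟩,
    mem_linearGrowth_of_abs_le fun p => f.norm_coe_le_norm p.1⟩
  have hmem : ((φ, 0), -h) ∈ supermartingaleCone :=
    mem_supermartingaleCone_of_nonneg fun x y => by simp [φ, h]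
  have := hπ φ 0 (-h) hmem
  simpa [φ, h, integral_neg] using this

lemma map_snd_eq_of_nonnegOnSupermartingaleCone [IsFiniteMeasure χ] [IsFiniteMeasure π]
    (hπ : NonnegOnSupermartingaleCone η χ fun h => ∫ p, h.1 p ∂π) : π.map Prod.snd = χ := by
  refine eq_of_forall_integral_le fun f => ?_
  rw [integral_map measurable_snd.aemeasurable f.continuous.aestronglyMeasurable]
  let ψ : linearGrowth ℝ := ⟨f, mem_linearGrowth_of_abs_le f.norm_coe_le_norm⟩
  let h : linearGrowth (ℝ × ℝ) := ⟨⟨fun p => f p.2, by fun_prop⟩,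
    mem_linearGrowth_of_abs_le fun p => f.norm_coe_le_norm p.2⟩
  have hmem : ((0, ψ), -h) ∈ supermartingaleCone :=
    mem_supermartingaleCone_of_nonneg fun x y => by simp [ψ, h]
  have := hπ 0 ψ (-h) hmem
  simpa [ψ, h, integral_neg] using this

lemma integral_mul_sub_nonpos_of_nonnegOnSupermartingaleCone
    (hπ : NonnegOnSupermartingaleCone η χ fun h => ∫ p, h.1 p ∂π)
    (θ : BoundedContinuousFunction ℝ NNReal) :
    ∫ p, (θ p.1 : ℝ) * (p.2 - p.1) ∂π ≤ 0 := by
  let strategy : C(ℝ × ℝ, ℝ) := ⟨fun p => θ p.1, by fun_prop⟩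
  have hbound (p : ℝ × ℝ) : |strategy p| ≤ nndist θ 0 :=
    (NNReal.abs_eq (θ p.1)).trans_le (BoundedContinuousFunction.NNReal.upper_bound θ p.1)
  let h : linearGrowth (ℝ × ℝ) := ⟨(ContinuousMap.snd - ContinuousMap.fst) * strategy,
    mul_mem_linearGrowth (sub_mem snd_mem_linearGrowth fst_mem_linearGrowth) hbound⟩
  have hmem : ((0, 0), -h) ∈ supermartingaleCone :=
    ⟨fun x => θ x, fun x => (θ x).coe_nonneg, fun x y => by simp [h, strategy, mul_comm]⟩
  have := hπ 0 0 (-h) hmem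
  simpa [h, strategy, integral_neg, mul_comm] using this

lemma isSupermartingaleCoupling_of_nonnegOnSupermartingaleCone [IsProbabilityMeasure η]
    [IsFiniteMeasure χ] (hweight : Integrable (linearWeight (ℝ × ℝ)).1 π)
    (hπ : NonnegOnSupermartingaleCone η χ fun h => ∫ p, h.1 p ∂π) :
    IsSupermartingaleCoupling η χ π := by
  have := isFiniteMeasure_of_integrable_linearWeight hweight
  have hfst := map_fst_eq_of_nonnegOnSupermartingaleCone hπ
  have hfst_int : Integrable (fun p : ℝ × ℝ => p.1) π :=
    integrable_of_integrable_linearWeight hweight ⟨_, fst_mem_linearGrowth⟩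
  have hsnd_int : Integrable (fun p : ℝ × ℝ => p.2) π :=
    integrable_of_integrable_linearWeight hweight ⟨_, snd_mem_linearGrowth⟩
  have hprob : IsProbabilityMeasure (π.map Prod.fst) := hfst ▸ ‹IsProbabilityMeasure η›
  refine ⟨Measure.isProbabilityMeasure_of_map Prod.fst, hfst,
    map_snd_eq_of_nonnegOnSupermartingaleCone hπ, hsnd_int, fun B hB => ?_⟩
  have hdrift : ∫ p in Prod.fst ⁻¹' B, (p.2 - p.1) ∂π ≤ 0 :=
    setIntegral_preimage_nonpos measurable_fst (hsnd_int.sub hfst_int)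
      (integral_mul_sub_nonpos_of_nonnegOnSupermartingaleCone hπ) hB
  rw [integral_sub hsnd_int.integrableOn hfst_int.integrableOn, sub_nonpos] at hdrift
  rwa [prod_univ, ← hfst, setIntegral_map (f := fun x => x) hB aestronglyMeasurable_id
    measurable_fst.aemeasurable]

lemma exists_coupling_of_leCD [IsProbabilityMeasure η] [IsProbabilityMeasure χ]
    (hη : Integrable (fun x : ℝ => x) η) (hχ : Integrable (fun x : ℝ => x) χ)
    (hle : LeCD η χ) : ∃ π, IsSupermartingaleCoupling η χ π := by
  obtain ⟨π, hweight, hπ⟩ := exists_measure_nonnegOnSupermartingaleCone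
    ((integrable_const 1).add hη.norm) ((integrable_const 1).add hχ.norm) hle
  exact ⟨π, isSupermartingaleCoupling_of_nonnegOnSupermartingaleCone hweight hπ⟩

end Coupling

/-- Lemma 2.1: equivalence of the convex-decreasing order, the pointwise ordering
of the potentials `P`, and the existence of a supermartingale coupling. -/
theorem leCD_iff_potential_iff_coupling
    (η χ : MeasureTheory.Measure ℝ)
    [MeasureTheory.IsProbabilityMeasure η] [MeasureTheory.IsProbabilityMeasure χ]
    (hη : MeasureTheory.Integrable (fun x : ℝ => x) η)
    (hχ : MeasureTheory.Integrable (fun x : ℝ => x) χ) :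
    (LeCD η χ ↔ ∀ k : ℝ, Ppot η k ≤ Ppot χ k) ∧
    (LeCD η χ ↔ ∃ π : MeasureTheory.Measure (ℝ × ℝ),
      IsSupermartingaleCoupling η χ π) := by
  have hmass : η univ = χ univ := by rw [measure_univ, measure_univ]
  refine ⟨⟨Ppot_le_of_leCD hη hχ, leCD_of_Ppot_le hmass hη hχ⟩, exists_coupling_of_leCD hη hχ, ?_⟩
  rintro ⟨π, hπ⟩
  exact leCD_of_Ppot_le hmass hη hχ (Ppot_le_of_coupling hη hπ)
end
end

section
/- Let μ₁, μ₂, ν ∈ 𝓜 with μ₁ + μ₂ ≤_pcd ν. Let S₁ be a shadow of μ₁ in ν, and let ν' ∈ 𝓜 satisfy S₁ + ν' = ν. Then μ₂ ≤_pcd ν'; moreover, if S₂ is a shadow of μ₂ in ν' and S is a shadow of μ₁ + μ₂ in ν, then S = S₁ + S₂. -/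
open MeasureTheory Set Filter

noncomputable section

/-!
For a measure in `𝓜`, `≤_pcd` is the pointwise order of the put potentials `P_η`, and `P_η`
determines `η`. The shadow `S` of `μ` in `ν` is characterised by `P_ν - P_S` being the convex hull
of `P_ν - P_μ`: if `h` is this hull then `P_ν - h` is again convex, hence it is the potential of a
measure below `ν`, which competes with `S`. Associativity of the shadow is then associativity of the
convex hull: for convex `g`, the functions `F - g` and `h - g` have the same convex minorants
whenever `h` is the convex hull of `F`.
-/

namespace IsConvexHullFn

variable {F g h u v : ℝ → ℝ}

lemma le_iff (hh : IsConvexHullFn F h) (hg : ConvexOn ℝ univ g) : g ≤ h ↔ g ≤ F :=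
  ⟨fun hgh => hgh.trans hh.2.1, hh.2.2 g hg⟩

lemma unique (hu : IsConvexHullFn F u) (hv : IsConvexHullFn F v) : u = v :=
  le_antisymm ((hv.le_iff hu.1).2 hu.2.1) ((hu.le_iff hv.1).2 hv.2.1)

lemma sub_iff (hh : IsConvexHullFn F h) (hg : ConvexOn ℝ univ g) :
    IsConvexHullFn (h - g) u ↔ IsConvexHullFn (F - g) u := by
  have minorant_iff {w : ℝ → ℝ} (hw : ConvexOn ℝ univ w) : w ≤ h - g ↔ w ≤ F - g := by
    rw [le_sub_iff_add_le, le_sub_iff_add_le, hh.le_iff (hw.add hg)]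
  exact and_congr_right fun hu => and_congr (minorant_iff hu)
    (forall₂_congr fun w hw => imp_congr (minorant_iff hw) Iff.rfl)

end IsConvexHullFn

lemma exists_isConvexHullFn {F g₀ : ℝ → ℝ} (hg₀ : ConvexOn ℝ univ g₀) (hle : g₀ ≤ F) :
    ∃ h, IsConvexHullFn F h := by
  let Minorant := {g : ℝ → ℝ // ConvexOn ℝ univ g ∧ g ≤ F}
  have : Nonempty Minorant := ⟨⟨g₀, hg₀, hle⟩⟩
  have hbdd (x : ℝ) : BddAbove (range fun g : Minorant => g.1 x) :=
    ⟨F x, forall_mem_range.2 fun g => g.2.2 x⟩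
  refine ⟨fun x => ⨆ g : Minorant, g.1 x, ⟨convex_univ, fun x _ y _ a b ha hb hab => ?_⟩,
    fun x => ciSup_le fun g => g.2.2 x, fun g hg hgF x => le_ciSup (hbdd x) ⟨g, hg, hgF⟩⟩
  refine ciSup_le fun g => (g.2.1.2 (mem_univ x) (mem_univ y) ha hb hab).trans ?_
  simp only [smul_eq_mul]
  gcongr
  · exact le_ciSup (hbdd x) g
  · exact le_ciSup (hbdd y) g

lemma convexOn_affine (c d : ℝ) : ConvexOn ℝ univ fun x => c * x + d := by
  refine ⟨convex_univ, fun x _ y _ a b _ _ hab => le_of_eq ?_⟩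
  simp only [smul_eq_mul]
  linear_combination (-d) * hab

lemma convexOn_univ_of_le_affine {φ : ℝ → ℝ}
    (h : ∀ x z c d, φ x ≤ c * x + d → φ z ≤ c * z + d → ∀ y ∈ Ioo x z, φ y ≤ c * y + d) :
    ConvexOn ℝ univ φ := by
  refine LinearOrder.convexOn_of_lt convex_univ fun x _ z _ hxz a b ha hb hab => ?_
  obtain rfl : a = 1 - b := eq_sub_of_add_eq hab
  have hzx : 0 < z - x := sub_pos.2 hxz
  obtain ⟨s, hs⟩ : ∃ s, s * (z - x) = φ z - φ x := ⟨_, div_mul_cancel₀ _ hzx.ne'⟩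
  have hy : x + b * (z - x) ∈ Ioo x z := by
    constructor <;> nlinarith [mul_pos ha hzx, mul_pos hb hzx]
  have hchord := h x z s (φ x - s * x) (by linarith) (by linarith) _ hy
  calc φ ((1 - b) • x + b • z) = φ (x + b * (z - x)) := by simp only [smul_eq_mul]; ring_nf
    _ ≤ s * (x + b * (z - x)) + (φ x - s * x) := hchord
    _ = (1 - b) • φ x + b • φ z := by
      simp only [smul_eq_mul]
      linear_combination b * hs

lemma nonneg_of_convexOn_of_notMem_Ioo {d : ℝ → ℝ} (hd : ConvexOn ℝ univ d) {x y z t : ℝ}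
    (hy : y ∈ Ioo x z) (hdx : 0 ≤ d x) (hdy : d y < 0) (hdz : 0 ≤ d z) (ht : t ∉ Ioo x z) :
    0 ≤ d t := by
  by_contra! hdt
  rcases le_or_gt t x with htx | htx
  · exact (hd.le_max_of_mem_Icc (mem_univ t) (mem_univ y) ⟨htx, hy.1.le⟩).not_gt
      ((max_lt hdt hdy).trans_le hdx)
  · have hzt : z ≤ t := not_lt.1 fun htz => ht ⟨htx, htz⟩
    exact (hd.le_max_of_mem_Icc (mem_univ y) (mem_univ t) ⟨hy.2.le, hzt⟩).not_gt
      ((max_lt hdy hdt).trans_le hdz)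

/-- If `f - h` exceeded an affine function `ℓ` inside an interval but not at its ends, then some
affine minorant of `f`, minus `ℓ`, would be a minorant of `f - g` exceeding the hull `h`. -/
lemma IsConvexHullFn.convexOn_sub {f g h : ℝ → ℝ} (hh : IsConvexHullFn (f - g) h)
    (hf : ConvexOn ℝ univ f) (hg : ConvexOn ℝ univ g) : ConvexOn ℝ univ (f - h) := by
  refine convexOn_univ_of_le_affine fun x z c d hx hz y hy => ?_
  simp only [Pi.sub_apply] at hx hz ⊢
  by_contra! hlt
  obtain ⟨m, hhm, hmf⟩ : ∃ m, h y + (c * y + d) < m ∧ m < f y := exists_between (by linarith)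
  obtain ⟨c', d', hle, hm⟩ := hf.exists_affine_le_of_lt_real (mem_univ y) hmf isClosed_univ
    (hf.continuousOn isOpen_univ).lowerSemicontinuousOn
  let L : ℝ → ℝ := fun t => (c' - c) * t + (d' - d)
  have hLf (t : ℝ) : L t + (c * t + d) ≤ f t := by
    linarith [hle t (mem_univ t)]
  have hhy : h y < L y := by linarith
  have hg_le (t : ℝ) (ht : t ∈ Icc x z) : g t ≤ c * t + d := by
    have hconv : ConvexOn ℝ univ fun s => g s + ((-c) * s + -d) := hg.add (convexOn_affine _ _)
    have hgx : g x ≤ f x - h x := le_sub_comm.1 (hh.2.1 x)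
    have hgz : g z ≤ f z - h z := le_sub_comm.1 (hh.2.1 z)
    have := (hconv.le_max_of_mem_Icc (mem_univ x) (mem_univ z) ht).trans
      (max_le (c := 0) (by linarith) (by linarith))
    linarith
  have hL_le : L ≤ f - g := by
    intro t
    by_cases ht : t ∈ Ioo x z
    · exact le_sub_iff_add_le.2 (by linarith [hLf t, hg_le t (Ioo_subset_Icc_self ht)])
    · have hconv : ConvexOn ℝ univ fun s => h s + ((c - c') * s + (d - d')) :=
        hh.1.add (convexOn_affine _ _)
      have := nonneg_of_convexOn_of_notMem_Ioo hconv hy (by linarith [hLf x]) (by linarith)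
        (by linarith [hLf z]) ht
      exact le_trans (by linarith) (hh.2.1 t)
  exact ((hh.le_iff (convexOn_affine _ _)).2 hL_le y).not_gt hhy

section Potential

open scoped ENNReal

variable {η χ : Measure ℝ}

lemma convexOn_max_const_sub_zero (k : ℝ) : ConvexOn ℝ univ fun x : ℝ => max (k - x) 0 :=
  ((convexOn_const k convex_univ).sub (concaveOn_id convex_univ)).sup
    (convexOn_const 0 convex_univ)

lemma convexOn_max_sub_const_zero (x : ℝ) : ConvexOn ℝ univ fun k : ℝ => max (k - x) 0 :=
  ((convexOn_id convex_univ).sub (concaveOn_const x convex_univ)).sup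
    (convexOn_const 0 convex_univ)

lemma antitone_max_const_sub_zero (k : ℝ) : Antitone fun x : ℝ => max (k - x) 0 :=
  fun _ _ hxy => max_le_max_right 0 (sub_le_sub_left hxy k)

lemma MemM.add (hη : MemM η) (hχ : MemM χ) : MemM (η + χ) :=
  have := hη.1
  have := hχ.1
  ⟨inferInstance, hη.2.add_measure hχ.2⟩

lemma MemM.mono (hχ : MemM χ) (h : η ≤ χ) : MemM η :=
  have := hχ.1
  ⟨isFiniteMeasure_of_le χ h, hχ.2.mono_measure h⟩

lemma MemM.integrable_max_const_sub_zero (hη : MemM η) (k : ℝ) :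
    Integrable (fun x => max (k - x) 0) η :=
  have := hη.1
  ((integrable_const k).sub hη.2).pos_part

lemma Ppot_nonneg (η : Measure ℝ) : 0 ≤ Ppot η :=
  fun _ => integral_nonneg fun _ => le_max_right _ _

lemma MemM.convexOn_Ppot (hη : MemM η) : ConvexOn ℝ univ (Ppot η) :=
  integral_convexOn_of_integrand_ae convex_univ (ae_of_all _ convexOn_max_sub_const_zero)
    fun k _ => hη.integrable_max_const_sub_zero k

lemma Ppot_add (hη : MemM η) (hχ : MemM χ) : Ppot (η + χ) = Ppot η + Ppot χ :=
  funext fun k => integral_add_measure (hη.integrable_max_const_sub_zero k)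
    (hχ.integrable_max_const_sub_zero k)

lemma Ppot_sub (hη : MemM η) (h : χ ≤ η) : Ppot (η - χ) = Ppot η - Ppot χ := by
  have := hη.1
  have := isFiniteMeasure_of_le η h
  rw [eq_sub_iff_add_eq, ← Ppot_add (hη.mono Measure.sub_le) (hη.mono h),
    Measure.sub_add_cancel_of_le h]

lemma MemM.tendsto_Ppot_atBot (hη : MemM η) : Tendsto (Ppot η) atBot (nhds 0) := by
  rw [← integral_zero ℝ ℝ (μ := η)]
  refine tendsto_integral_filter_of_dominated_convergence (fun x => max (0 - x) 0)
    (Eventually.of_forall fun k => (hη.integrable_max_const_sub_zero k).1) ?_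
    (hη.integrable_max_const_sub_zero 0) (ae_of_all _ fun x => ?_)
  · filter_upwards [eventually_le_atBot 0] with k hk
    refine ae_of_all _ fun x => ?_
    rw [Real.norm_of_nonneg (le_max_right _ _)]
    gcongr
  · refine tendsto_const_nhds.congr' ?_
    filter_upwards [eventually_le_atBot x] with k hk
    rw [max_eq_right (sub_nonpos.2 hk)]

lemma MemM.tendsto_Ppot_div_atTop (hη : MemM η) :
    Tendsto (fun k => Ppot η k / k) atTop (nhds (η.real univ)) := by
  have := hη.1
  have hmass : ∫ _, (1 : ℝ) ∂η = η.real univ := by simp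
  simp_rw [← hmass, Ppot, ← integral_div]
  refine tendsto_integral_filter_of_dominated_convergence (fun x => 1 + |x|)
    (Eventually.of_forall fun k => ((hη.integrable_max_const_sub_zero k).div_const k).1) ?_
    ((integrable_const 1).add hη.2.abs) (ae_of_all _ fun x => ?_)
  · filter_upwards [eventually_ge_atTop 1] with k hk
    refine ae_of_all _ fun x => ?_
    have hk0 : 0 < k := one_pos.trans_le hk
    rw [Real.norm_of_nonneg (div_nonneg (le_max_right _ _) hk0.le), div_le_iff₀ hk0]
    have : |x| ≤ |x| * k := le_mul_of_one_le_right (abs_nonneg x) hk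
    exact max_le (by linarith [neg_abs_le x]) (by positivity)
  · have hlim : Tendsto (fun k : ℝ => 1 - x / k) atTop (nhds 1) := by
      simpa using (tendsto_id.const_div_atTop x).const_sub 1
    refine hlim.congr' ?_
    filter_upwards [eventually_gt_atTop 0, eventually_ge_atTop x] with k hk hxk
    rw [max_eq_left (sub_nonneg.2 hxk), sub_div, div_self hk.ne']

lemma measure_univ_le_of_Ppot_le (hη : MemM η) (hχ : MemM χ) (h : Ppot η ≤ Ppot χ) :
    η univ ≤ χ univ := by
  have := hη.1
  have := hχ.1
  refine (ENNReal.toReal_le_toReal (measure_ne_top η _) (measure_ne_top χ _)).1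
    (le_of_tendsto_of_tendsto hη.tendsto_Ppot_div_atTop hχ.tendsto_Ppot_div_atTop ?_)
  filter_upwards [eventually_ge_atTop 0] with k hk
  exact div_le_div_of_nonneg_right (h k) hk

/-- The potential `k ↦ ∫ (k - x)⁺ η(dx)` with values in `[0, ∞]`. Unlike `Ppot`, it is meaningful
for measures outside `𝓜`; on `𝓜` the two agree, see `MemM.ofReal_Ppot`. -/
def lpot (η : Measure ℝ) (k : ℝ) : ℝ≥0∞ := ∫⁻ x, ENNReal.ofReal (k - x) ∂η

lemma MemM.ofReal_Ppot (hη : MemM η) (k : ℝ) : ENNReal.ofReal (Ppot η k) = lpot η k := by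
  rw [Ppot, lpot, ofReal_integral_eq_lintegral_ofReal (hη.integrable_max_const_sub_zero k)
    (ae_of_all _ fun x => le_max_right _ _)]
  simp

lemma MemM.lpot_ne_top (hη : MemM η) (k : ℝ) : lpot η k ≠ ∞ :=
  hη.ofReal_Ppot k ▸ ENNReal.ofReal_ne_top

lemma lpot_add (η χ : Measure ℝ) (k : ℝ) : lpot (η + χ) k = lpot η k + lpot χ k :=
  lintegral_add_measure _ _ _

lemma lintegral_lpot_neg_comm (η χ : Measure ℝ) [SFinite η] [SFinite χ] :
    ∫⁻ x, lpot η (-x) ∂χ = ∫⁻ y, lpot χ (-y) ∂η := by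
  simp only [lpot]
  rw [lintegral_lintegral_swap (by fun_prop)]
  simp_rw [neg_sub_comm]

lemma lpot_add_mul_measure_Iic_le (η : Measure ℝ) {k l : ℝ} (hkl : k ≤ l) :
    lpot η k + ENNReal.ofReal (l - k) * η (Iic k) ≤ lpot η l := by
  rw [lpot, ← lintegral_indicator_const measurableSet_Iic, ← lintegral_add_left (by fun_prop)]
  refine lintegral_mono fun x => ?_
  rcases le_or_gt x k with hx | hx
  · rw [indicator_of_mem (mem_Iic.2 hx), ← ENNReal.ofReal_add (by linarith) (by linarith)]
    exact ENNReal.ofReal_le_ofReal (by linarith)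
  · rw [indicator_of_notMem (notMem_Iic.2 hx), add_zero]
    exact ENNReal.ofReal_le_ofReal (by linarith)

lemma lpot_le_add_mul_measure_Iic (η : Measure ℝ) (k l : ℝ) :
    lpot η l ≤ lpot η k + ENNReal.ofReal (l - k) * η (Iic l) := by
  rw [lpot, lpot, ← lintegral_indicator_const measurableSet_Iic,
    ← lintegral_add_left (by fun_prop)]
  refine lintegral_mono fun x => ?_
  rcases le_or_gt x l with hx | hx
  · rw [indicator_of_mem (mem_Iic.2 hx)]
    exact (ENNReal.ofReal_le_ofReal (by linarith)).trans ENNReal.ofReal_add_le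
  · simp [ENNReal.ofReal_of_nonpos (sub_nonpos.2 hx.le)]

lemma measure_Iic_le_of_lpot_eq (h : lpot η = lpot χ) {k l : ℝ} (hk : lpot χ k ≠ ∞) (hkl : k < l) :
    η (Iic k) ≤ χ (Iic l) := by
  have hle : lpot χ k + ENNReal.ofReal (l - k) * η (Iic k)
      ≤ lpot χ k + ENNReal.ofReal (l - k) * χ (Iic l) :=
    calc _ = lpot η k + ENNReal.ofReal (l - k) * η (Iic k) := by rw [h]
      _ ≤ lpot η l := lpot_add_mul_measure_Iic_le η hkl.le
      _ = lpot χ l := by rw [h]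
      _ ≤ _ := lpot_le_add_mul_measure_Iic χ k l
  have hpos : ENNReal.ofReal (l - k) ≠ 0 := (ENNReal.ofReal_pos.2 (sub_pos.2 hkl)).ne'
  rwa [ENNReal.add_le_add_iff_left hk, ENNReal.mul_le_mul_iff_right hpos ENNReal.ofReal_ne_top]
    at hle

lemma tendsto_measure_Iic_nhdsGT {k l : ℝ} (hkl : k < l) (hl : η (Iic l) ≠ ∞) :
    Tendsto (fun r => η (Iic r)) (nhdsWithin k (Ioi k)) (nhds (η (Iic k))) := by
  have hInter : ⋂ r > k, Iic r = Iic k := by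
    ext x
    simpa using forall_gt_imp_ge_iff_le_of_dense
  rw [← hInter]
  exact tendsto_measure_biInter_gt (fun r _ => measurableSet_Iic.nullMeasurableSet)
    (fun _ _ _ hij => Iic_subset_Iic.2 hij) ⟨l, hkl, hl⟩

lemma measure_Iic_le_measure_Iic_of_lpot_eq (h : lpot η = lpot χ) {k l : ℝ} (hk : lpot χ k ≠ ∞)
    (hkl : k < l) (hl : χ (Iic l) ≠ ∞) : η (Iic k) ≤ χ (Iic k) :=
  ge_of_tendsto (tendsto_measure_Iic_nhdsGT hkl hl) <|
    eventually_mem_nhdsWithin.mono fun _ hr => measure_Iic_le_of_lpot_eq h hk hr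

lemma eq_of_lpot_eq [IsFiniteMeasure χ] (hχ : ∀ k, lpot χ k ≠ ∞) (h : lpot η = lpot χ) :
    η = χ := by
  have hle (k : ℝ) : η (Iic k) ≤ χ (Iic k) :=
    measure_Iic_le_measure_Iic_of_lpot_eq h (hχ k) (lt_add_one k) (measure_ne_top χ _)
  refine (Measure.ext_of_Iic χ η fun k => le_antisymm ?_ (hle k)).symm
  exact measure_Iic_le_measure_Iic_of_lpot_eq h.symm (h ▸ hχ k) (lt_add_one k)
    (ne_top_of_le_ne_top (measure_ne_top χ _) (hle _))

lemma eq_of_Ppot_eq (hη : MemM η) (hχ : MemM χ) (h : Ppot η = Ppot χ) : η = χ := by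
  have := hχ.1
  refine eq_of_lpot_eq hχ.lpot_ne_top (funext fun k => ?_)
  rw [← hη.ofReal_Ppot, ← hχ.ofReal_Ppot, h]

end Potential

section SecondDerivative

variable {p : ℝ → ℝ}

lemma tendsto_rightDeriv_atBot (hp : ConvexOn ℝ univ p) (h0 : Tendsto p atBot (nhds 0)) :
    Tendsto (fun x => derivWithin p (Ioi x) x) atBot (nhds 0) := by
  have hshift (c : ℝ) : Tendsto (fun x => p (x + c)) atBot (nhds 0) :=
    h0.comp (tendsto_atBot_add_const_right atBot c tendsto_id)
  refine tendsto_of_tendsto_of_tendsto_of_le_of_le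
    (g := fun x => p x - p (x + -1)) (h := fun x => p (x + 1) - p x)
    (by simpa using h0.sub (hshift (-1))) (by simpa using (hshift 1).sub h0)
    (fun x => ?_) (fun x => ?_)
  · have hslope := hp.slope_le_leftDeriv_of_mem_interior (x := x + -1) (y := x) (mem_univ _)
      (by simp) (by linarith)
    simpa [slope_def_field] using
      hslope.trans (hp.leftDeriv_le_rightDeriv_of_mem_interior (x := x) (by simp))
  · simpa [slope_def_field] using hp.rightDeriv_le_slope_of_mem_interior (x := x) (y := x + 1)
      (by simp) (mem_univ _) (by linarith)

lemma monotone_rightDeriv (hp : ConvexOn ℝ univ p) :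
    Monotone fun x => derivWithin p (Ioi x) x := by
  simpa using hp.monotoneOn_rightDeriv

lemma setLIntegral_Iio_rightDeriv (hp : ConvexOn ℝ univ p) (h0 : Tendsto p atBot (nhds 0))
    (k : ℝ) :
    ∫⁻ x in Iio k, ENNReal.ofReal (derivWithin p (Ioi x) x) = ENNReal.ofReal (p k) := by
  have hmono := monotone_rightDeriv hp
  have hcover : AECover (volume.restrict (Iio k)) atBot fun a : ℝ => Ioi a :=
    aecover_Ioi tendsto_id
  refine hcover.lintegral_eq_of_tendsto _ hmono.measurable.ennreal_ofReal.aemeasurable ?_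
  have hlim : Tendsto (fun a => ENNReal.ofReal (p k - p a)) atBot
      (nhds (ENNReal.ofReal (p k))) :=
    (ENNReal.continuous_ofReal.tendsto _).comp (by simpa using h0.const_sub (p k))
  refine hlim.congr' ?_
  filter_upwards [eventually_le_atBot k] with a ha
  rw [Measure.restrict_restrict measurableSet_Ioi, Ioi_inter_Iio,
    ← intervalIntegral.integral_eq_sub_of_hasDeriv_right_of_le ha
      ((hp.continuousOn isOpen_univ).mono (subset_univ _))
      (fun x _ => hp.hasDerivWithinAt_rightDeriv_of_mem_interior (by simp))
      hmono.intervalIntegrable,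
    intervalIntegral.integral_of_le ha, integral_Ioc_eq_integral_Ioo,
    ofReal_integral_eq_lintegral_ofReal _
      (ae_of_all _ fun x => hmono.le_of_tendsto (tendsto_rightDeriv_atBot hp h0) x)]
  exact (hmono.intervalIntegrable (a := a) (b := k)).1.mono_set Ioo_subset_Ioc_self

lemma lpot_eq_setLIntegral_Iio (η : Measure ℝ) (k : ℝ) :
    lpot η k = ∫⁻ s in Iio k, η (Iic s) := by
  have hlevel {t : ℝ} (ht : 0 < t) : {x | t ≤ max (k - x) 0} = Iic (k - t) := by
    ext x
    simp [ht.not_ge, le_sub_comm]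
  calc lpot η k = ∫⁻ x, ENNReal.ofReal (max (k - x) 0) ∂η := by simp [lpot]
    _ = ∫⁻ t in Ioi 0, η {x | t ≤ max (k - x) 0} :=
      lintegral_eq_lintegral_meas_le η (ae_of_all _ fun x => le_max_right _ _) (by fun_prop)
    _ = ∫⁻ t in Ioi 0, η (Iic (k - t)) :=
      setLIntegral_congr_fun measurableSet_Ioi fun t ht => by simp only [hlevel ht]
    _ = ∫⁻ s in Iio k, η (Iic s) := by
      rw [← lintegral_indicator measurableSet_Ioi, ← lintegral_indicator measurableSet_Iio,
        ← lintegral_sub_left_eq_self _ k]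
      simp [indicator]

/-- The measure is the second derivative of `p`, with the right derivative of `p` as its
distribution function. -/
lemma exists_lpot_eq (hp : ConvexOn ℝ univ p) (h0 : Tendsto p atBot (nhds 0)) :
    ∃ η : Measure ℝ, SFinite η ∧ ∀ k, lpot η k = ENNReal.ofReal (p k) := by
  have hmono := monotone_rightDeriv hp
  have hlim := tendsto_rightDeriv_atBot hp h0
  let F := hmono.stieltjesFunction
  have hF0 : Tendsto F atBot (nhds 0) :=
    tendsto_of_tendsto_of_tendsto_of_le_of_le hlim
      (hlim.comp (tendsto_atBot_add_const_right atBot 1 tendsto_id))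
      (fun x => hmono.le_rightLim le_rfl) (fun x => hmono.rightLim_le (lt_add_one x))
  have hFae : ∀ᵐ x, F x = derivWithin p (Ioi x) x := by
    filter_upwards [(Monotone.countable_not_continuousAt hmono).ae_notMem volume] with x hx
    exact hmono.continuousWithinAt_Ioi_iff_rightLim_eq.1 (not_not.1 hx).continuousWithinAt
  refine ⟨F.measure, inferInstance, fun k => ?_⟩
  simp_rw [lpot_eq_setLIntegral_Iio, F.measure_Iic hF0, sub_zero]
  rw [← setLIntegral_Iio_rightDeriv hp h0 k]
  exact lintegral_congr_ae (ae_restrict_of_ae (hFae.mono fun x hx => congrArg _ hx))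

lemma MemM.exists_le_Ppot_eq {ν : Measure ℝ} (hν : MemM ν) (hp : ConvexOn ℝ univ p)
    (hp' : ConvexOn ℝ univ (Ppot ν - p)) (h0 : 0 ≤ p) (hle : p ≤ Ppot ν) :
    ∃ η ≤ ν, Ppot η = p := by
  have := hν.1
  have hlim : Tendsto p atBot (nhds 0) := squeeze_zero h0 hle hν.tendsto_Ppot_atBot
  have hlim' : Tendsto (Ppot ν - p) atBot (nhds 0) := by
    rw [← sub_zero (0 : ℝ)]
    exact hν.tendsto_Ppot_atBot.sub hlim
  obtain ⟨η, -, hη⟩ := exists_lpot_eq hp hlim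
  obtain ⟨θ, -, hθ⟩ := exists_lpot_eq hp' hlim'
  have hsum : η + θ = ν := by
    refine eq_of_lpot_eq hν.lpot_ne_top (funext fun k => ?_)
    rw [lpot_add, hη, hθ, Pi.sub_apply, ← ENNReal.ofReal_add (h0 k) (sub_nonneg.2 (hle k)),
      add_sub_cancel, hν.ofReal_Ppot]
  have hην : η ≤ ν := hsum ▸ Measure.le_add_right le_rfl
  refine ⟨η, hην, funext fun k => ?_⟩
  rw [← ENNReal.ofReal_eq_ofReal_iff (Ppot_nonneg η k) (h0 k), (hν.mono hην).ofReal_Ppot, hη]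

end SecondDerivative

section Order

open scoped ENNReal

variable {α β : Measure ℝ}

lemma LeCD.lePCD (h : LeCD α β) : LePCD α β := fun f _ => h f

lemma LePCD.real_univ_le [IsFiniteMeasure α] [IsFiniteMeasure β] (h : LePCD α β) :
    α.real univ ≤ β.real univ := by
  simpa using h (fun _ => 1) (fun _ => zero_le_one) (convexOn_const 1 convex_univ) antitone_const
    (integrable_const _) (integrable_const _)

lemma LeCD.real_univ_eq [IsFiniteMeasure α] [IsFiniteMeasure β] (h : LeCD α β) :
    α.real univ = β.real univ := by
  refine le_antisymm h.lePCD.real_univ_le ?_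
  simpa using h (fun _ => -1) (convexOn_const (-1) convex_univ) antitone_const
    (integrable_const _) (integrable_const _)

lemma LePCD.Ppot_le (hα : MemM α) (hβ : MemM β) (h : LePCD α β) : Ppot α ≤ Ppot β := fun k =>
  h _ (fun _ => le_max_right _ _) (convexOn_max_const_sub_zero k) (antitone_max_const_sub_zero k)
    (hα.integrable_max_const_sub_zero k) (hβ.integrable_max_const_sub_zero k)

/-- The function `y ↦ f (-y) - inf f` is the potential of `ρ`, so `f` is a mixture of put payoffs
and a constant. -/
lemma exists_lintegral_ofReal_eq_lintegral_lpot_add {f : ℝ → ℝ} (hf0 : 0 ≤ f)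
    (hfc : ConvexOn ℝ univ f) (hfa : Antitone f) :
    ∃ (ρ : Measure ℝ) (c : ℝ≥0∞), ∀ (χ : Measure ℝ) [SFinite χ],
      ∫⁻ x, ENNReal.ofReal (f x) ∂χ = ∫⁻ y, lpot χ (-y) ∂ρ + c * χ univ := by
  set c := ⨅ x, f x
  have hbdd : BddBelow (range f) := ⟨0, forall_mem_range.2 hf0⟩
  have hcf (x : ℝ) : c ≤ f x := ciInf_le hbdd x
  have hconv : ConvexOn ℝ univ fun y => f (-y) - c :=
    (hfc.comp_linearMap (-LinearMap.id)).sub (concaveOn_const c convex_univ)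
  have hlim : Tendsto (fun y => f (-y) - c) atBot (nhds 0) := by
    rw [← sub_self c]
    exact ((tendsto_atTop_ciInf hfa hbdd).comp tendsto_neg_atBot_atTop).sub_const c
  obtain ⟨ρ, _, hρ⟩ := exists_lpot_eq hconv hlim
  have hf (x : ℝ) : ENNReal.ofReal (f x) = lpot ρ (-x) + ENNReal.ofReal c := by
    rw [hρ, neg_neg, ← ENNReal.ofReal_add (sub_nonneg.2 (hcf x)) (le_ciInf hf0), sub_add_cancel]
  refine ⟨ρ, ENNReal.ofReal c, fun χ _ => ?_⟩
  simp_rw [hf]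
  rw [lintegral_add_right _ measurable_const, lintegral_const, lintegral_lpot_neg_comm]

lemma lePCD_iff_Ppot_le (hα : MemM α) (hβ : MemM β) : LePCD α β ↔ Ppot α ≤ Ppot β := by
  refine ⟨LePCD.Ppot_le hα hβ, fun h f hf0 hfc hfa hfα hfβ => ?_⟩
  have := hα.1
  have := hβ.1
  have hlpot (k : ℝ) : lpot α k ≤ lpot β k := by
    rw [← hα.ofReal_Ppot, ← hβ.ofReal_Ppot]
    exact ENNReal.ofReal_le_ofReal (h k)
  obtain ⟨ρ, c, hρ⟩ := exists_lintegral_ofReal_eq_lintegral_lpot_add hf0 hfc hfa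
  rw [← ENNReal.ofReal_le_ofReal_iff (integral_nonneg hf0),
    ofReal_integral_eq_lintegral_ofReal hfα (ae_of_all _ hf0),
    ofReal_integral_eq_lintegral_ofReal hfβ (ae_of_all _ hf0), hρ, hρ]
  exact add_le_add (lintegral_mono fun y => hlpot (-y))
    (mul_le_mul_right (measure_univ_le_of_Ppot_le hα hβ h) c)

lemma tendsto_integral_max_neg_natCast {X : Type*} [MeasurableSpace X] {μ : Measure X}
    {f : X → ℝ} (hf : Integrable f μ) :
    Tendsto (fun n : ℕ => ∫ x, max (f x) (-n) ∂μ) atTop (nhds (∫ x, f x ∂μ)) := by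
  refine tendsto_integral_of_dominated_convergence (fun x => |f x|)
    (fun n => hf.1.sup aestronglyMeasurable_const) hf.abs (fun n => ae_of_all _ fun x => ?_)
    (ae_of_all _ fun x => tendsto_const_nhds.congr' ?_)
  · rw [Real.norm_eq_abs, abs_le]
    exact ⟨(neg_abs_le _).trans (le_max_left _ _),
      max_le (le_abs_self _) ((neg_nonpos.2 n.cast_nonneg).trans (abs_nonneg _))⟩
  · filter_upwards [eventually_ge_atTop ⌈-f x⌉₊] with n hn
    rw [max_eq_left (neg_le.1 (Nat.ceil_le.1 hn))]

lemma LePCD.leCD [IsFiniteMeasure α] [IsFiniteMeasure β] (h : LePCD α β)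
    (hmass : α.real univ = β.real univ) : LeCD α β := by
  intro f hfc hfa hfα hfβ
  refine le_of_tendsto_of_tendsto' (tendsto_integral_max_neg_natCast hfα)
    (tendsto_integral_max_neg_natCast hfβ) fun n => ?_
  have hint {χ : Measure ℝ} [IsFiniteMeasure χ] (hf : Integrable f χ) :
      Integrable (fun x => max (f x) (-n)) χ := hf.sup (integrable_const _)
  have hshift := h (fun x => max (f x) (-n) + n)
    (fun x => neg_le_iff_add_nonneg.1 (le_max_right _ _))
    ((hfc.sup (convexOn_const _ convex_univ)).add_const _)
    ((hfa.max antitone_const).add_const _)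
    ((hint hfα).add (integrable_const _)) ((hint hfβ).add (integrable_const _))
  rw [integral_add (hint hfα) (integrable_const _), integral_add (hint hfβ) (integrable_const _),
    integral_const, integral_const, hmass] at hshift
  exact le_of_add_le_add_right hshift

end Order

/-- The competitor for `S` is the measure with potential `P_ν - h`, where `h` is the convex hull of
`P_ν - P_μ`. -/
lemma IsShadow.isConvexHullFn {μ ν S : Measure ℝ} (hμ : MemM μ) (hν : MemM ν)
    (hS : IsShadow μ ν S) : IsConvexHullFn (Ppot ν - Ppot μ) (Ppot ν - Ppot S) := by
  obtain ⟨hSM, hμS, hSν, hSmin⟩ := hS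
  have hSν : S ≤ ν := Measure.le_iff.2 hSν
  have hconv : ConvexOn ℝ univ (Ppot ν - Ppot S) :=
    Ppot_sub hν hSν ▸ (hν.mono Measure.sub_le).convexOn_Ppot
  have hle : Ppot ν - Ppot S ≤ Ppot ν - Ppot μ := sub_le_sub_left (hμS.lePCD.Ppot_le hμ hSM) _
  obtain ⟨h, hh⟩ := exists_isConvexHullFn hconv hle
  have hSh : Ppot ν - h ≤ Ppot S := sub_le_comm.1 ((hh.le_iff hconv).2 hle)
  have hμh : Ppot μ ≤ Ppot ν - h := le_sub_comm.1 hh.2.1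
  have hSν' : Ppot S ≤ Ppot ν := by
    rw [← sub_nonneg, ← Ppot_sub hν hSν]
    exact Ppot_nonneg _
  obtain ⟨η, hην, hη⟩ := hν.exists_le_Ppot_eq (hh.convexOn_sub hν.convexOn_Ppot hμ.convexOn_Ppot)
    (by simpa using hh.1) ((Ppot_nonneg μ).trans hμh) (hSh.trans hSν')
  have hηM : MemM η := hν.mono hην
  have := hμ.1
  have := hSM.1
  have := hηM.1
  have hμη : LePCD μ η := (lePCD_iff_Ppot_le hμ hηM).2 (hη ▸ hμh)
  have hηS : LePCD η S := (lePCD_iff_Ppot_le hηM hSM).2 (hη ▸ hSh)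
  have hmass : μ.real univ = η.real univ :=
    hμη.real_univ_le.antisymm (hηS.real_univ_le.trans_eq hμS.real_univ_eq.symm)
  have hSη : LeCD S η := hSmin η hηM (hμη.leCD hmass) fun A _ => hην A
  have hP : Ppot S = Ppot ν - h := le_antisymm (hη ▸ hSη.lePCD.Ppot_le hSM hηM) hSh
  rwa [hP, sub_sub_cancel]

/-- Proposition 3.11: associativity of the shadow measure. -/
theorem shadow_associativity
    (μ₁ μ₂ ν : MeasureTheory.Measure ℝ)
    (hμ₁ : MemM μ₁) (hμ₂ : MemM μ₂) (hν : MemM ν)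
    (hpcd : LePCD (μ₁ + μ₂) ν)
    (S₁ : MeasureTheory.Measure ℝ) (hS₁ : IsShadow μ₁ ν S₁)
    (ν' : MeasureTheory.Measure ℝ) (hν' : MemM ν') (hsum : S₁ + ν' = ν) :
    LePCD μ₂ ν' ∧
    ∀ S₂ S : MeasureTheory.Measure ℝ,
      IsShadow μ₂ ν' S₂ → IsShadow (μ₁ + μ₂) ν S → S = S₁ + S₂ := by
  have hμ : MemM (μ₁ + μ₂) := hμ₁.add hμ₂
  have hν'P : Ppot ν' = Ppot ν - Ppot S₁ := by
    rw [← hsum, Ppot_add hS₁.1 hν', add_sub_cancel_left]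
  have hull₁ : IsConvexHullFn (Ppot ν - Ppot μ₁) (Ppot ν') :=
    hν'P ▸ hS₁.isConvexHullFn hμ₁ hν
  constructor
  · have hle : Ppot μ₁ + Ppot μ₂ ≤ Ppot ν := Ppot_add hμ₁ hμ₂ ▸ hpcd.Ppot_le hμ hν
    exact (lePCD_iff_Ppot_le hμ₂ hν').2
      ((hull₁.le_iff hμ₂.convexOn_Ppot).2 (le_sub_iff_add_le'.2 hle))
  · intro S₂ S hS₂ hS
    have hull₂ : IsConvexHullFn (Ppot ν - Ppot μ₁ - Ppot μ₂) (Ppot ν' - Ppot S₂) :=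
      (hull₁.sub_iff hμ₂.convexOn_Ppot).1 (hS₂.isConvexHullFn hμ₂ hν')
    have hull : IsConvexHullFn (Ppot ν - Ppot μ₁ - Ppot μ₂) (Ppot ν - Ppot S) := by
      rw [sub_sub, ← Ppot_add hμ₁ hμ₂]
      exact hS.isConvexHullFn hμ hν
    refine eq_of_Ppot_eq hS.1 (hS₁.1.add hS₂.1) ?_
    rw [Ppot_add hS₁.1 hS₂.1, ← sub_right_inj (a := Ppot ν), hull.unique hull₂, hν'P, sub_sub]
end
end
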